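/- arXiv:2212.13230 — 7 statements merged into one kernel-verified Lean document; each statement's English description precedes it below -/
import Mathlib

section
/- Let k₃ ∈ ℝ and let w : ℝ × ℝ → ℝ be a smooth function satisfying w_t(t,z) = w(t,z)² · w_zz(t,z) for all (t,z). Define u : ℝ × ℝ → ℝ by u(t,x) := w(t, x + k₃t)². Then u satisfies u_t = k₃·u_x − u_x²/2 + u·u_xx at every point (t,x). -/
/-- Partial derivative with respect to the first (time) variable. -/
noncomputable def dt (u : ℝ → ℝ → ℝ) (t x : ℝ) : ℝ := deriv (fun s => u s x) t

/-- `n`-th partial derivative with respect to the second (space) variable. -/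
noncomputable def dx (u : ℝ → ℝ → ℝ) (n : ℕ) (t x : ℝ) : ℝ := iteratedDeriv n (u t) x

/-!
The transformation is a composition of two. Squaring turns `w_t = w² w_zz` into
`v_t = v v_zz - v_z² / 2`: the two equations differ by the factor `2w`. The Galilean boost
`z = x + kt` commutes with space derivatives and adds `k v_z` to the time derivative, which is
the remaining term.
-/

open Function

/-- The Galilean boost of `v` with velocity `k`: the function `v` read in the moving coordinate
`z = x + k * t`. -/
def galileanBoost (k : ℝ) (v : ℝ → ℝ → ℝ) (t x : ℝ) : ℝ := v t (x + k * t)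

section GalileanBoost

variable {v : ℝ → ℝ → ℝ} {t x : ℝ}

lemma dt_eq_fderiv (hv : DifferentiableAt ℝ (uncurry v) (t, x)) :
    dt v t x = fderiv ℝ (uncurry v) (t, x) (1, 0) :=
  (hv.hasFDerivAt.comp_hasDerivAt (f := fun s => (s, x)) t
    ((hasDerivAt_id t).prodMk (hasDerivAt_const t x))).deriv

lemma dx_one_eq_fderiv (hv : DifferentiableAt ℝ (uncurry v) (t, x)) :
    dx v 1 t x = fderiv ℝ (uncurry v) (t, x) (0, 1) := by
  rw [dx, iteratedDeriv_one]
  exact (hv.hasFDerivAt.comp_hasDerivAt (f := fun y => (t, y)) x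
    ((hasDerivAt_const x t).prodMk (hasDerivAt_id x))).deriv

lemma dx_galileanBoost (k : ℝ) (v : ℝ → ℝ → ℝ) (n : ℕ) (t x : ℝ) :
    dx (galileanBoost k v) n t x = dx v n t (x + k * t) :=
  congrFun (iteratedDeriv_comp_add_const n (v t) (k * t)) x

lemma dt_galileanBoost {k : ℝ} (hv : DifferentiableAt ℝ (uncurry v) (t, x + k * t)) :
    dt (galileanBoost k v) t x = dt v t (x + k * t) + k * dx v 1 t (x + k * t) := by
  have boost_line : HasDerivAt (fun s => (s, x + k * s)) (1, k) t :=
    (hasDerivAt_id t).prodMk (by simpa using ((hasDerivAt_id t).const_mul k).const_add x)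
  have velocity_split : ((1, k) : ℝ × ℝ) = (1, 0) + k • (0, 1) := by simp
  calc dt (galileanBoost k v) t x
      = fderiv ℝ (uncurry v) (t, x + k * t) (1, k) :=
        (hv.hasFDerivAt.comp_hasDerivAt (f := fun s => (s, x + k * s)) t boost_line).deriv
    _ = dt v t (x + k * t) + k * dx v 1 t (x + k * t) := by
        rw [velocity_split, map_add, map_smul, smul_eq_mul, dt_eq_fderiv hv,
          dx_one_eq_fderiv hv]

end GalileanBoost

section Square

variable {v w : ℝ → ℝ → ℝ} {t x : ℝ}

lemma dx_mul {n : ℕ} (hv : ContDiffAt ℝ n (v t) x) (hw : ContDiffAt ℝ n (w t) x) :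
    dx (v * w) n t x =
      ∑ i ∈ Finset.range (n + 1), n.choose i * dx v i t x * dx w (n - i) t x :=
  iteratedDeriv_mul hv hw

lemma dt_sq (hw : DifferentiableAt ℝ (fun s => w s x) t) :
    dt (w ^ 2) t x = 2 * w t x * dt w t x := by
  simpa [dt] using (hw.hasDerivAt.fun_pow 2).deriv

lemma dx_one_sq (hw : DifferentiableAt ℝ (w t) x) :
    dx (w ^ 2) 1 t x = 2 * w t x * dx w 1 t x := by
  simpa [dx, iteratedDeriv_one] using (hw.hasDerivAt.pow 2).deriv

lemma dx_two_sq (hw : ContDiffAt ℝ 2 (w t) x) :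
    dx (w ^ 2) 2 t x = 2 * dx w 1 t x ^ 2 + 2 * w t x * dx w 2 t x := by
  have dx_zero : dx w 0 t x = w t x := congrFun iteratedDeriv_zero x
  calc dx (w ^ 2) 2 t x
      = ∑ i ∈ Finset.range 3, Nat.choose 2 i * dx w i t x * dx w (2 - i) t x := by
        rw [sq, dx_mul hw hw]
    _ = w t x * dx w 2 t x + 2 * dx w 1 t x * dx w 1 t x + dx w 2 t x * w t x := by
        simp [Finset.sum_range_succ, dx_zero]
    _ = 2 * dx w 1 t x ^ 2 + 2 * w t x * dx w 2 t x := by ring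

lemma dt_sq_sub_eq_two_mul (hwt : DifferentiableAt ℝ (fun s => w s x) t)
    (hwx : ContDiffAt ℝ 2 (w t) x) :
    dt (w ^ 2) t x - (w t x ^ 2 * dx (w ^ 2) 2 t x - dx (w ^ 2) 1 t x ^ 2 / 2) =
      2 * w t x * (dt w t x - w t x ^ 2 * dx w 2 t x) := by
  rw [dt_sq hwt, dx_one_sq (hwx.differentiableAt (by norm_num)), dx_two_sq hwx]
  ring

end Square

theorem stmt_0_general {k₃ : ℝ} {w : ℝ → ℝ → ℝ} {t x : ℝ}
    (hw : DifferentiableAt ℝ (uncurry w) (t, x + k₃ * t))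
    (hwx : ContDiffAt ℝ 2 (w t) (x + k₃ * t))
    (hweq : dt w t (x + k₃ * t) = w t (x + k₃ * t) ^ 2 * dx w 2 t (x + k₃ * t))
    {u : ℝ → ℝ → ℝ} (hu : ∀ s y, u s y = w s (y + k₃ * s) ^ 2) :
    dt u t x = k₃ * dx u 1 t x - dx u 1 t x ^ 2 / 2 + u t x * dx u 2 t x := by
  obtain rfl : u = galileanBoost k₃ (w ^ 2) := by
    ext s y
    exact hu s y
  have hw_time : DifferentiableAt ℝ (fun s => w s (x + k₃ * t)) t :=
    hw.comp (f := fun s => (s, x + k₃ * t)) t (by fun_prop)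
  have hw_sq : DifferentiableAt ℝ (uncurry (w ^ 2)) (t, x + k₃ * t) := hw.fun_pow 2
  have square_eq := dt_sq_sub_eq_two_mul hw_time hwx
  rw [hweq, sub_self, mul_zero, sub_eq_zero] at square_eq
  rw [dt_galileanBoost hw_sq, square_eq, dx_galileanBoost, dx_galileanBoost, hu]
  ring

theorem stmt_0 (k₃ : ℝ) (w : ℝ → ℝ → ℝ)
    (hw : ContDiff ℝ (⊤ : ℕ∞) fun p : ℝ × ℝ => w p.1 p.2)
    (hweq : ∀ t z, dt w t z = (w t z) ^ 2 * dx w 2 t z)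
    (u : ℝ → ℝ → ℝ)
    (hu : ∀ t x, u t x = (w t (x + k₃ * t)) ^ 2) :
    ∀ t x, dt u t x =
      k₃ * dx u 1 t x - (dx u 1 t x) ^ 2 / 2 + u t x * dx u 2 t x := by
  intro t x
  have hwx : ContDiff ℝ 2 (w t) := (contDiff_infty.1 hw 2).comp (contDiff_prodMk_right t)
  exact stmt_0_general (hw.differentiable (by simp) _) hwx.contDiffAt (hweq _ _) hu
end

section
/- Let p₁, p₂, k₂, k₃ ∈ ℝ and let u : ℝ × ℝ → ℝ be smooth with 3u(t,x) − 8p₁ > 0 for all (t,x). Suppose u satisfies u_t = p₂(3u − 8p₁)^{8/3}u_xx + p₂(3u − 8p₁)^{5/3}u_x² + (k₃ + k₂p₂(3u − 8p₁)^{8/3})u_x at every point. Then w := p₂(3u − 8p₁)^{8/3} satisfies w_t = (k₃ + k₂w)w_x − w_x²/2 + w·w_xx at every point. -/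
/-!
Under a change of unknown `w = g(u)`, an equation `u_t = A u_x + B u_xx + C u_x²` becomes
`w_t = A w_x + B w_xx + D w_x²` as soon as `g' C = B g'' + D g'²`, since
`w_xx = g' u_xx + g'' u_x²` is the only derivative of `w` in which `g''` occurs. If
`g(y) = p (a y - b) ^ r` and `B = w`, this holds for `C = p a (r - 1 + D r) (a u - b) ^ (r - 1)`.
For `D = -1/2`, `a = 3` and `r = 8/3` the factor `a (r - 1 + D r)` is `1`.
-/

section ChainRule

variable {g : ℝ → ℝ} {u : ℝ → ℝ → ℝ} {t x : ℝ}

theorem dx_one (u : ℝ → ℝ → ℝ) (t x : ℝ) : dx u 1 t x = deriv (u t) x := by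
  rw [dx, iteratedDeriv_one]

theorem dt_comp (hg : DifferentiableAt ℝ g (u t x)) (hu : DifferentiableAt ℝ (fun s => u s x) t) :
    dt (fun s y => g (u s y)) t x = deriv g (u t x) * dt u t x :=
  deriv_comp t hg hu

theorem dx_one_comp (hg : DifferentiableAt ℝ g (u t x)) (hu : DifferentiableAt ℝ (u t) x) :
    dx (fun s y => g (u s y)) 1 t x = deriv g (u t x) * dx u 1 t x := by
  rw [dx_one, dx_one]
  exact deriv_comp x hg hu

theorem dx_two_comp (hg : ContDiffAt ℝ 2 g (u t x)) (hu : ContDiffAt ℝ 2 (u t) x) :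
    dx (fun s y => g (u s y)) 2 t x =
      iteratedDeriv 2 g (u t x) * dx u 1 t x ^ 2 + deriv g (u t x) * dx u 2 t x := by
  rw [dx_one]
  exact iteratedDeriv_comp_two hg hu

theorem dt_comp_eq_of_dt_eq {A B C D : ℝ} (hg : ContDiffAt ℝ 2 g (u t x))
    (hut : DifferentiableAt ℝ (fun s => u s x) t) (hux : ContDiffAt ℝ 2 (u t) x)
    (hcoeff : deriv g (u t x) * C = B * iteratedDeriv 2 g (u t x) + D * deriv g (u t x) ^ 2)
    (hu : dt u t x = A * dx u 1 t x + B * dx u 2 t x + C * dx u 1 t x ^ 2)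
    {w : ℝ → ℝ → ℝ} (hw : ∀ s y, w s y = g (u s y)) :
    dt w t x = A * dx w 1 t x + B * dx w 2 t x + D * dx w 1 t x ^ 2 := by
  obtain rfl : w = fun s y => g (u s y) := funext₂ hw
  have hg' : DifferentiableAt ℝ g (u t x) := hg.differentiableAt two_ne_zero
  rw [dt_comp hg' hut, dx_one_comp hg' (hux.differentiableAt two_ne_zero), dx_two_comp hg hux, hu]
  linear_combination dx u 1 t x ^ 2 * hcoeff

end ChainRule

section AffinePower

theorem deriv_const_mul_affine_rpow (p a b r y : ℝ) :
    deriv (fun z => p * (a * z - b) ^ r) y = p * a * r * (a * y - b) ^ (r - 1) := by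
  have hscale := deriv_comp_mul_left a (fun z : ℝ => (z - b) ^ r) y
  rw [deriv_comp_sub_const (fun z : ℝ => z ^ r), Real.deriv_rpow_const, smul_eq_mul] at hscale
  rw [deriv_const_mul_field, hscale]
  ring

theorem iteratedDeriv_two_const_mul_affine_rpow (p a b r y : ℝ) :
    iteratedDeriv 2 (fun z => p * (a * z - b) ^ r) y =
      p * a ^ 2 * r * (r - 1) * (a * y - b) ^ (r - 2) := by
  rw [iteratedDeriv_succ, iteratedDeriv_one, funext (deriv_const_mul_affine_rpow p a b r),
    deriv_const_mul_affine_rpow, show r - 1 - 1 = r - 2 by ring]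
  ring

theorem contDiffAt_const_mul_affine_rpow {p a b r y : ℝ} {n : ℕ}
    (h : a * y - b ≠ 0 ∨ (n : ℝ) ≤ r) : ContDiffAt ℝ n (fun z => p * (a * z - b) ^ r) y := by
  have haffine : ContDiffAt ℝ n (fun z => a * z - b) y := by fun_prop
  exact contDiffAt_const.mul (h.elim haffine.rpow_const_of_ne haffine.rpow_const_of_le)

theorem rpow_mul_rpow_sub_two {v r : ℝ} (hv : 0 ≤ v) (h : v ≠ 0 ∨ r ≠ 1) :
    v ^ r * v ^ (r - 2) = (v ^ (r - 1)) ^ 2 := by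
  rcases h with hv0 | hr
  · have hpos : 0 < v := hv.lt_of_ne' hv0
    rw [sq, ← Real.rpow_add hpos, ← Real.rpow_add hpos]
    ring_nf
  · have hsum : r + (r - 2) ≠ 0 := fun h => hr (by linarith)
    have hsum' : r - 1 + (r - 1) ≠ 0 := fun h => hr (by linarith)
    rw [sq, ← Real.rpow_add' hv hsum, ← Real.rpow_add' hv hsum']
    ring_nf

theorem dt_const_mul_affine_rpow_eq {p a b r A D t x : ℝ} {u : ℝ → ℝ → ℝ}
    (hut : DifferentiableAt ℝ (fun s => u s x) t) (hux : ContDiffAt ℝ 2 (u t) x)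
    (hnonneg : 0 ≤ a * u t x - b) (hr : a * u t x - b ≠ 0 ∨ 2 ≤ r)
    (hu : dt u t x = A * dx u 1 t x + p * (a * u t x - b) ^ r * dx u 2 t x
      + p * (a * (r - 1 + D * r)) * (a * u t x - b) ^ (r - 1) * dx u 1 t x ^ 2)
    {w : ℝ → ℝ → ℝ} (hw : ∀ s y, w s y = p * (a * u s y - b) ^ r) :
    dt w t x = A * dx w 1 t x + w t x * dx w 2 t x + D * dx w 1 t x ^ 2 := by
  have hpow : (a * u t x - b) ^ r * (a * u t x - b) ^ (r - 2) =
      ((a * u t x - b) ^ (r - 1)) ^ 2 :=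
    rpow_mul_rpow_sub_two hnonneg (hr.imp_right fun h => by linarith)
  have hg : ContDiffAt ℝ 2 (fun z => p * (a * z - b) ^ r) (u t x) :=
    contDiffAt_const_mul_affine_rpow (n := 2) hr
  rw [hw t x]
  refine dt_comp_eq_of_dt_eq hg hut hux ?_ hu hw
  rw [deriv_const_mul_affine_rpow, iteratedDeriv_two_const_mul_affine_rpow]
  linear_combination -(p ^ 2 * a ^ 2 * r * (r - 1)) * hpow

end AffinePower

theorem stmt_2_general (p₁ p₂ k₂ k₃ : ℝ) (u : ℝ → ℝ → ℝ)
    (hut : ∀ t x, DifferentiableAt ℝ (fun s => u s x) t) (hux : ∀ t, ContDiff ℝ 2 (u t))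
    (hnonneg : ∀ t x, 0 ≤ 3 * u t x - 8 * p₁)
    (heq : ∀ t x, dt u t x =
      p₂ * (3 * u t x - 8 * p₁) ^ ((8 : ℝ) / 3) * dx u 2 t x
      + p₂ * (3 * u t x - 8 * p₁) ^ ((5 : ℝ) / 3) * (dx u 1 t x) ^ 2
      + (k₃ + k₂ * p₂ * (3 * u t x - 8 * p₁) ^ ((8 : ℝ) / 3)) * dx u 1 t x)
    (w : ℝ → ℝ → ℝ)
    (hw : ∀ t x, w t x = p₂ * (3 * u t x - 8 * p₁) ^ ((8 : ℝ) / 3)) :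
    ∀ t x, dt w t x =
      (k₃ + k₂ * w t x) * dx w 1 t x - (dx w 1 t x) ^ 2 / 2 + w t x * dx w 2 t x := by
  intro t x
  have hu : dt u t x = (k₃ + k₂ * w t x) * dx u 1 t x
      + p₂ * (3 * u t x - 8 * p₁) ^ ((8 : ℝ) / 3) * dx u 2 t x
      + p₂ * (3 * ((8 : ℝ) / 3 - 1 + -1 / 2 * (8 / 3))) * (3 * u t x - 8 * p₁) ^ ((8 : ℝ) / 3 - 1)
        * dx u 1 t x ^ 2 := by
    rw [heq, hw, show (8 : ℝ) / 3 - 1 = 5 / 3 by norm_num]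
    ring
  rw [dt_const_mul_affine_rpow_eq (hut t x) (hux t).contDiffAt (hnonneg t x)
    (Or.inr (by norm_num)) hu hw]
  ring

theorem stmt_2 (p₁ p₂ k₂ k₃ : ℝ) (u : ℝ → ℝ → ℝ)
    (hu : ContDiff ℝ (⊤ : ℕ∞) fun p : ℝ × ℝ => u p.1 p.2)
    (hpos : ∀ t x, 3 * u t x - 8 * p₁ > 0)
    (heq : ∀ t x, dt u t x =
      p₂ * (3 * u t x - 8 * p₁) ^ ((8 : ℝ) / 3) * dx u 2 t x
      + p₂ * (3 * u t x - 8 * p₁) ^ ((5 : ℝ) / 3) * (dx u 1 t x) ^ 2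
      + (k₃ + k₂ * p₂ * (3 * u t x - 8 * p₁) ^ ((8 : ℝ) / 3)) * dx u 1 t x)
    (w : ℝ → ℝ → ℝ)
    (hw : ∀ t x, w t x = p₂ * (3 * u t x - 8 * p₁) ^ ((8 : ℝ) / 3)) :
    ∀ t x, dt w t x =
      (k₃ + k₂ * w t x) * dx w 1 t x - (dx w 1 t x) ^ 2 / 2 + w t x * dx w 2 t x := by
  have hut (t x) : DifferentiableAt ℝ (fun s => u s x) t :=
    (hu.comp (contDiff_prodMk_left x)).differentiable (by simp) t
  have hux (t) : ContDiff ℝ 2 (u t) := (hu.comp (contDiff_prodMk_right t)).of_le (by norm_cast)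
  exact stmt_2_general p₁ p₂ k₂ k₃ u hut hux (fun t x => (hpos t x).le) heq w hw
end

section
/- Let d₁ ∈ ℂ and let w : ℂ × ℂ → ℂ be an entire (everywhere complex-differentiable, jointly holomorphic) function satisfying the Burgers equation w_y = w_zz + w·w_z at every point (y,z). For t ∈ ℂ with t ≠ 1 and x ∈ ℂ, set y := 1/(t−1), z := −i·y·x − i·d₁/(2y), and define u(t,x) := d₁/y − i·z − i·y·w(y,z), where i is the imaginary unit. Then u satisfies u_t = u_xx + u·u_x + d₁ at every point (t,x) with t ≠ 1, where the partial derivatives are complex partial derivatives. -/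
/-- Complex partial derivative with respect to the first variable. -/
noncomputable def cdt (u : ℂ → ℂ → ℂ) (t x : ℂ) : ℂ := deriv (fun s => u s x) t

/-- `n`-th complex partial derivative with respect to the second variable. -/
noncomputable def cdx (u : ℂ → ℂ → ℂ) (n : ℕ) (t x : ℂ) : ℂ := iteratedDeriv n (u t) x

/-!
Substituting `v(t, x) = b w(τ, b x + e) + f x + g`, with `τ, b, e, f, g` functions of `t`, into
the Burgers equation and comparing coefficients of `w_z`, `w`, `x` and `1` leaves the system
`τ' = b²`, `b' = f b`, `e' = g b`, `f' = f²`, `g' = f g + k`, where `k` is the forcing gained.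
With `T = t - 1`, the point transformation below is the solution `τ = 1 / T`, `b = -i / T`,
`e = -i d₁ T / 2`, `f = -1 / T`, `g = d₁ T / 2`, `k = d₁`.
-/

open Complex Filter Function Topology

namespace Burgers

/-- The Burgers equation `u_t = u_xx + u u_x + c` with forcing `c`, at the single point `(t, x)`.
Smoothness of `u` is not part of the definition and is assumed separately. -/
def SolvesAt (c : ℂ) (u : ℂ → ℂ → ℂ) (t x : ℂ) : Prop :=
  cdt u t x = cdx u 2 t x + u t x * cdx u 1 t x + c

theorem SolvesAt.congr_of_eventuallyEq {c t x : ℂ} {u v : ℂ → ℂ → ℂ} (hv : SolvesAt c v t x)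
    (huv : uncurry u =ᶠ[𝓝 (t, x)] uncurry v) : SolvesAt c u t x := by
  have h_time : (fun s => u s x) =ᶠ[𝓝 t] fun s => v s x :=
    (Continuous.prodMk_left x).continuousAt.eventually huv
  have h_space : u t =ᶠ[𝓝 x] v t :=
    (Continuous.prodMk_right t).continuousAt.eventually huv
  simpa only [SolvesAt, cdt, cdx, h_time.deriv_eq, h_space.iteratedDeriv_eq, h_space.eq_of_nhds]
    using hv

theorem hasDerivAt_comp_curve {w : ℂ → ℂ → ℂ} {y z : ℂ → ℂ} {y' z' t : ℂ}
    (hw : DifferentiableAt ℂ (uncurry w) (y t, z t))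
    (hy : HasDerivAt y y' t) (hz : HasDerivAt z z' t) :
    HasDerivAt (fun s => w (y s) (z s))
      (y' * cdt w (y t) (z t) + z' * cdx w 1 (y t) (z t)) t := by
  set L := fderiv ℂ (uncurry w) (y t, z t)
  have h_fst : cdt w (y t) (z t) = L (1, 0) :=
    (hw.hasFDerivAt.comp_hasDerivAt (f := fun s => (s, z t)) (y t)
      ((hasDerivAt_id _).prodMk (hasDerivAt_const _ _))).deriv
  have h_snd : cdx w 1 (y t) (z t) = L (0, 1) := by
    rw [cdx, iteratedDeriv_one]
    exact (hw.hasFDerivAt.comp_hasDerivAt (f := fun s => (y t, s)) (z t)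
      ((hasDerivAt_const _ _).prodMk (hasDerivAt_id _))).deriv
  have h_split : L (y', z') = y' * L (1, 0) + z' * L (0, 1) := by
    rw [← smul_eq_mul, ← smul_eq_mul, ← map_smul, ← map_smul, ← map_add]
    simp
  rw [h_fst, h_snd, ← h_split]
  exact hw.hasFDerivAt.comp_hasDerivAt t (hy.prodMk hz)

section AffineChange

variable {𝕜 : Type*} [NontriviallyNormedField 𝕜] {F : 𝕜 → 𝕜} {b e x : 𝕜}

theorem hasDerivAt_affine_change (a p q : 𝕜) (hF : DifferentiableAt 𝕜 F (b * x + e)) :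
    HasDerivAt (fun x => a * F (b * x + e) + p * x + q) (a * b * deriv F (b * x + e) + p) x := by
  have h_inner : HasDerivAt (fun x => b * x + e) b x := by
    simpa using ((hasDerivAt_id x).const_mul b).add_const e
  have h_linear : HasDerivAt (fun x => p * x) p x := by
    simpa using (hasDerivAt_id x).const_mul p
  refine ((((hF.hasDerivAt.comp x h_inner).const_mul a).add h_linear).add_const q).congr_deriv ?_
  ring

theorem iteratedDeriv_two_affine_change [CompleteSpace 𝕜] (a p q : 𝕜)
    (hF : AnalyticAt 𝕜 F (b * x + e)) :
    iteratedDeriv 2 (fun x => a * F (b * x + e) + p * x + q) x =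
      a * b ^ 2 * iteratedDeriv 2 F (b * x + e) := by
  have h_analytic : ∀ᶠ s in 𝓝 x, AnalyticAt 𝕜 F (b * s + e) :=
    (show ContinuousAt (fun s => b * s + e) x by fun_prop).eventually hF.eventually_analyticAt
  have h_deriv : deriv (fun x => a * F (b * x + e) + p * x + q) =ᶠ[𝓝 x]
      fun s => a * b * deriv F (b * s + e) + 0 * s + p :=
    h_analytic.mono fun s hs => by
      simpa using (hasDerivAt_affine_change a p q hs.differentiableAt).deriv
  rw [iteratedDeriv_succ, iteratedDeriv_one, h_deriv.deriv_eq,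
    (hasDerivAt_affine_change (a * b) 0 p hF.deriv.differentiableAt).deriv,
    iteratedDeriv_succ, iteratedDeriv_one]
  ring

end AffineChange

theorem SolvesAt.affine_transform {w : ℂ → ℂ → ℂ} {τ b e f g : ℂ → ℂ} {c k t x : ℂ}
    (hw : DifferentiableAt ℂ (uncurry w) (τ t, b t * x + e t))
    (hw_section : AnalyticAt ℂ (w (τ t)) (b t * x + e t))
    (hsol : SolvesAt c w (τ t) (b t * x + e t))
    (hτ : HasDerivAt τ (b t ^ 2) t) (hb : HasDerivAt b (f t * b t) t)
    (he : HasDerivAt e (g t * b t) t) (hf : HasDerivAt f (f t ^ 2) t)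
    (hg : HasDerivAt g (f t * g t + k) t) :
    SolvesAt (b t ^ 3 * c + k)
      (fun t x => b t * w (τ t) (b t * x + e t) + f t * x + g t) t x := by
  set z := b t * x + e t
  have h_z : HasDerivAt (fun s => b s * x + e s) (f t * b t * x + g t * b t) t :=
    (hb.mul_const x).add he
  have h_time : cdt (fun t x => b t * w (τ t) (b t * x + e t) + f t * x + g t) t x =
      f t * b t * w (τ t) z +
        b t * (b t ^ 2 * cdt w (τ t) z + (f t * b t * x + g t * b t) * cdx w 1 (τ t) z) +
        f t ^ 2 * x + (f t * g t + k) :=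
    (((hb.mul (hasDerivAt_comp_curve hw hτ h_z)).add (hf.mul_const x)).add hg).deriv
  have h_space : cdx (fun t x => b t * w (τ t) (b t * x + e t) + f t * x + g t) 1 t x =
      b t * b t * cdx w 1 (τ t) z + f t := by
    simpa only [cdx, iteratedDeriv_one] using
      (hasDerivAt_affine_change (b t) (f t) (g t) hw_section.differentiableAt).deriv
  have h_space_two : cdx (fun t x => b t * w (τ t) (b t * x + e t) + f t * x + g t) 2 t x =
      b t * b t ^ 2 * cdx w 2 (τ t) z :=
    iteratedDeriv_two_affine_change (b t) (f t) (g t) hw_section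
  rw [SolvesAt] at hsol
  rw [SolvesAt, h_time, h_space, h_space_two, hsol]
  ring

/-- The variable `y` as a function of the new time `t`, the inverse of `t = 1 + 1 / y`. -/
noncomputable def sourceTime (t : ℂ) : ℂ := 1 / (t - 1)

/-- The variable `z` as a function of the new variables, from `x = -d / (2 y²) + i z / y`. -/
noncomputable def sourceSpace (d t x : ℂ) : ℂ :=
  -I * sourceTime t * x - I * d / (2 * sourceTime t)

/-- The new unknown `u = -i (i d / y + z + y w)` as a function of the new variables; it has
junk values at `t = 1`. -/
noncomputable def pointTransform (d : ℂ) (w : ℂ → ℂ → ℂ) (t x : ℂ) : ℂ :=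
  d / sourceTime t - I * sourceSpace d t x -
    I * sourceTime t * w (sourceTime t) (sourceSpace d t x)

theorem sourceSpace_eq_affine (d t x : ℂ) :
    sourceSpace d t x = -I * sourceTime t * x + -I * d / 2 * (t - 1) := by
  simp only [sourceSpace, sourceTime, div_eq_mul_inv, mul_inv, inv_inv]
  ring

theorem pointTransform_eq_affine (d : ℂ) (w : ℂ → ℂ → ℂ) (t x : ℂ) :
    pointTransform d w t x =
      -I * sourceTime t * w (sourceTime t) (-I * sourceTime t * x + -I * d / 2 * (t - 1)) +
        -sourceTime t * x + d / 2 * (t - 1) := by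
  have h_div : d / sourceTime t = d * (t - 1) := by simp [sourceTime]
  rw [pointTransform, sourceSpace_eq_affine, h_div]
  linear_combination (sourceTime t * x + d / 2 * (t - 1)) * I_sq

theorem hasDerivAt_sourceTime {t : ℂ} (ht : t ≠ 1) :
    HasDerivAt sourceTime (-sourceTime t ^ 2) t := by
  have h_eq_inv : sourceTime = fun s => (s - 1)⁻¹ := funext fun s => one_div (s - 1)
  have h_deriv := ((hasDerivAt_id t).sub_const 1).fun_inv (sub_ne_zero.mpr ht)
  simpa [h_eq_inv, neg_div] using h_deriv

theorem continuousAt_sourceTime_sourceSpace (d x : ℂ) {t : ℂ} (ht : t ≠ 1) :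
    ContinuousAt (fun p : ℂ × ℂ => (sourceTime p.1, sourceSpace d p.1 p.2)) (t, x) := by
  have h_time : ContinuousAt (fun p : ℂ × ℂ => sourceTime p.1) (t, x) :=
    (hasDerivAt_sourceTime ht).continuousAt.fst'
  simp only [sourceSpace_eq_affine]
  fun_prop

theorem solvesAt_pointTransform {d : ℂ} {w : ℂ → ℂ → ℂ} {t x : ℂ} (ht : t ≠ 1)
    (hw : DifferentiableAt ℂ (uncurry w) (sourceTime t, sourceSpace d t x))
    (hw_section : AnalyticAt ℂ (w (sourceTime t)) (sourceSpace d t x))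
    (hsol : SolvesAt 0 w (sourceTime t) (sourceSpace d t x)) :
    SolvesAt d (pointTransform d w) t x := by
  have hT (a : ℂ) : HasDerivAt (fun s => a * (s - 1)) a t := by
    simpa using ((hasDerivAt_id t).sub_const 1).const_mul a
  have hτ := hasDerivAt_sourceTime ht
  have h_cancel : sourceTime t * (t - 1) = 1 := one_div_mul_cancel (sub_ne_zero.mpr ht)
  rw [sourceSpace_eq_affine] at hw hw_section hsol
  rw [funext₂ (pointTransform_eq_affine d w)]
  simpa only [mul_zero, zero_add] using SolvesAt.affine_transform (k := d)
    (b := fun s => -I * sourceTime s) (e := fun s => -I * d / 2 * (s - 1))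
    (f := fun s => -sourceTime s) (g := fun s => d / 2 * (s - 1)) hw hw_section hsol
    (hτ.congr_deriv (by linear_combination -sourceTime t ^ 2 * I_sq))
    ((hτ.const_mul (-I)).congr_deriv (by ring))
    ((hT _).congr_deriv (by linear_combination I * d / 2 * h_cancel))
    (hτ.neg.congr_deriv (by ring))
    ((hT _).congr_deriv (by linear_combination d / 2 * h_cancel))

end Burgers

open Burgers in
theorem stmt_4_general (d₁ : ℂ) (w : ℂ → ℂ → ℂ) {Ω : Set (ℂ × ℂ)} (hΩ : IsOpen Ω)
    (hw : DifferentiableOn ℂ (fun p : ℂ × ℂ => w p.1 p.2) Ω)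
    (hweq : ∀ y z, (y, z) ∈ Ω → cdt w y z = cdx w 2 y z + w y z * cdx w 1 y z)
    (u : ℂ → ℂ → ℂ)
    (hu : ∀ t x, t ≠ 1 → (sourceTime t, sourceSpace d₁ t x) ∈ Ω →
      u t x = pointTransform d₁ w t x) :
    ∀ t x, t ≠ 1 → (sourceTime t, sourceSpace d₁ t x) ∈ Ω →
      cdt u t x = cdx u 2 t x + u t x * cdx u 1 t x + d₁ := by
  intro t x ht hmem
  have h_domain : ∀ᶠ p : ℂ × ℂ in 𝓝 (t, x), (sourceTime p.1, sourceSpace d₁ p.1 p.2) ∈ Ω :=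
    (continuousAt_sourceTime_sourceSpace d₁ x ht).eventually_mem (hΩ.mem_nhds hmem)
  have h_eq : uncurry u =ᶠ[𝓝 (t, x)] uncurry (pointTransform d₁ w) := by
    filter_upwards [continuousAt_fst.eventually_ne ht, h_domain] with p hp hpΩ using
      hu p.1 p.2 hp hpΩ
  have h_sol : SolvesAt 0 w (sourceTime t) (sourceSpace d₁ t x) := by
    simpa only [SolvesAt, add_zero] using hweq _ _ hmem
  have h_slice : DifferentiableOn ℂ (w (sourceTime t)) {z | (sourceTime t, z) ∈ Ω} :=
    hw.comp (f := fun z => (sourceTime t, z)) (by fun_prop) fun _ hz => hz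
  have h_section : AnalyticAt ℂ (w (sourceTime t)) (sourceSpace d₁ t x) :=
    h_slice.analyticAt ((hΩ.preimage (Continuous.prodMk_right _)).mem_nhds hmem)
  exact (solvesAt_pointTransform ht (hw.differentiableAt (hΩ.mem_nhds hmem)) h_section
    h_sol).congr_of_eventuallyEq h_eq

theorem stmt_4 (d₁ : ℂ) (w : ℂ → ℂ → ℂ)
    (hw : Differentiable ℂ fun p : ℂ × ℂ => w p.1 p.2)
    (hweq : ∀ y z, cdt w y z = cdx w 2 y z + w y z * cdx w 1 y z)
    (u : ℂ → ℂ → ℂ)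
    (hu : ∀ t x, t ≠ 1 → u t x =
      d₁ / (1 / (t - 1))
      - Complex.I * (-Complex.I * (1 / (t - 1)) * x - Complex.I * d₁ / (2 * (1 / (t - 1))))
      - Complex.I * (1 / (t - 1)) *
          w (1 / (t - 1))
            (-Complex.I * (1 / (t - 1)) * x - Complex.I * d₁ / (2 * (1 / (t - 1))))) :
    ∀ t x, t ≠ 1 → cdt u t x = cdx u 2 t x + u t x * cdx u 1 t x + d₁ :=
  fun t x ht => stmt_4_general d₁ w isOpen_univ hw.differentiableOn (fun y z _ => hweq y z) u
    (fun s y hs _ => hu s y hs) t x ht (Set.mem_univ _)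
end

section
/- Let u : ℝ × ℝ → ℝ be smooth with u(t,x) ≠ 0 for all (t,x) and satisfying u_t = u²·u_xx at every point. Let f, g : ℝ × ℝ → ℝ be smooth functions such that: (i) f_t = u²·f_xx + 2u·u_xx·f at every point (f is a symmetry characteristic of u_t = u²u_xx), (ii) g_x = f/u² at every point, and (iii) g_t = f_x at every point. Then the function h := u·f_x + u²·u_xx·g satisfies h_t = u²·h_xx + 2u·u_xx·h at every point; that is, h is again a symmetry characteristic. -/
/-!
Write `L q = q_t - u² q_xx - 2 u u_xx q` for the linearization of `u_t = u² u_xx` at a solution `u`.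
Time translation is a symmetry, so `L u_t = 0`. Since `u² u_xx = u_t`, the claim is that
`L (u f_x) + L (u_t g) = 0`. If `u² g_x = f`, the product rule gives
`L (u f_x) = u (L f)_x + 2 u (u u_xx)_x f` and `L (u_t g) = u_t (g_t - f_x) - 2 u (u u_xx)_x f`:
the defects cancel, and the remaining terms vanish when `L f = 0` and `g_t = f_x`.
These are identities between commuting derivations of a commutative ring.
-/

section DifferentialRing

variable {R A : Type*} [CommSemiring R] [CommRing A] [Algebra R A]
  {Dt Dx : Derivation R A A} {u f g : A}

/-- The linearization `q ↦ q_t - u² q_xx - 2 u u_xx q` of the equation `u_t = u² u_xx` at `u`, with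
derivations `Dt` and `Dx` of a commutative ring as the partial derivatives. Symmetry characteristics
are its zeros. -/
def linearization (Dt Dx : Derivation R A A) (u q : A) : A :=
  Dt q - u ^ 2 * Dx (Dx q) - 2 * u * Dx (Dx u) * q

theorem linearization_eq_zero_iff {q : A} :
    linearization Dt Dx u q = 0 ↔ Dt q = u ^ 2 * Dx (Dx q) + 2 * u * Dx (Dx u) * q := by
  rw [linearization, sub_sub, sub_eq_zero]

theorem linearization_add (q r : A) :
    linearization Dt Dx u (q + r) = linearization Dt Dx u q + linearization Dt Dx u r := by
  simp only [linearization, map_add]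
  ring

theorem linearization_mul (q r : A) :
    linearization Dt Dx u (q * r) =
      linearization Dt Dx u q * r + q * (Dt r - u ^ 2 * Dx (Dx r)) - 2 * u ^ 2 * Dx q * Dx r := by
  simp only [linearization, Derivation.leibniz, map_add, smul_eq_mul]
  ring

theorem derivation_sq_mul (D : Derivation R A A) (a b : A) :
    D (a ^ 2 * b) = 2 * a * D a * b + a ^ 2 * D b := by
  simp only [pow_two, Derivation.leibniz, smul_eq_mul]
  ring

theorem linearization_timeDeriv (comm : Function.Commute Dt Dx) (hu : Dt u = u ^ 2 * Dx (Dx u)) :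
    linearization Dt Dx u (Dt u) = 0 := by
  have hutt : Dt (Dt u) = 2 * u * Dt u * Dx (Dx u) + u ^ 2 * Dx (Dx (Dt u)) := by
    conv_lhs => rw [hu, derivation_sq_mul, comm, comm]
  rw [linearization, hutt]
  ring

theorem linearization_mul_spaceDeriv (comm : Function.Commute Dt Dx)
    (hu : Dt u = u ^ 2 * Dx (Dx u)) (f : A) :
    linearization Dt Dx u (u * Dx f) =
      u * Dx (linearization Dt Dx u f) + 2 * u * Dx (u * Dx (Dx u)) * f := by
  have hLu : linearization Dt Dx u u = -2 * u * (u * Dx (Dx u)) := by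
    rw [linearization, hu]
    ring
  have hLfx : Dx (linearization Dt Dx u f) = Dt (Dx f) -
      (2 * u * Dx u * Dx (Dx f) + u ^ 2 * Dx (Dx (Dx f))) -
      2 * (Dx (u * Dx (Dx u)) * f + u * Dx (Dx u) * Dx f) := by
    have hdouble : 2 * u * Dx (Dx u) * f = u * Dx (Dx u) * f + u * Dx (Dx u) * f := by ring
    rw [linearization, map_sub, map_sub, derivation_sq_mul, comm, hdouble, map_add,
      Derivation.leibniz, smul_eq_mul, smul_eq_mul]
    ring
  rw [linearization_mul, hLu, hLfx]
  ring

theorem linearization_timeDeriv_mul (comm : Function.Commute Dt Dx)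
    (hu : Dt u = u ^ 2 * Dx (Dx u)) (hgx : u ^ 2 * Dx g = f) :
    linearization Dt Dx u (Dt u * g) =
      Dt u * (Dt g - Dx f) - 2 * u * Dx (u * Dx (Dx u)) * f := by
  have hutx : Dx (Dt u) = 2 * u * Dx u * Dx (Dx u) + u ^ 2 * Dx (Dx (Dx u)) := by
    rw [hu, derivation_sq_mul]
  have hfx : Dx f = 2 * u * Dx u * Dx g + u ^ 2 * Dx (Dx g) := by
    rw [← hgx, derivation_sq_mul]
  rw [linearization_mul, linearization_timeDeriv comm hu, hutx, hfx, hu, ← hgx,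
    Derivation.leibniz, smul_eq_mul, smul_eq_mul]
  ring

theorem stmt_10_general (comm : Function.Commute Dt Dx) (hu : Dt u = u ^ 2 * Dx (Dx u))
    (hf : Dt f = u ^ 2 * Dx (Dx f) + 2 * u * Dx (Dx u) * f)
    (hgx : u ^ 2 * Dx g = f) (hgt : Dt g = Dx f) {h : A}
    (hh : h = u * Dx f + u ^ 2 * Dx (Dx u) * g) :
    Dt h = u ^ 2 * Dx (Dx h) + 2 * u * Dx (Dx u) * h := by
  rw [← linearization_eq_zero_iff] at hf ⊢
  rw [hh, ← hu, linearization_add, linearization_mul_spaceDeriv comm hu,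
    linearization_timeDeriv_mul comm hu hgx, hf, hgt, map_zero]
  ring

end DifferentialRing

section SmoothFunctions

open scoped ContDiff

variable {𝕜 E : Type*} [NontriviallyNormedField 𝕜] [NormedAddCommGroup E] [NormedSpace 𝕜 E]

variable (𝕜 E) in
/-- The algebra of `C^∞` functions `E → 𝕜`, on which directional derivatives act as derivations. -/
def smoothFunctions : Subalgebra 𝕜 (E → 𝕜) where
  carrier := {w | ContDiff 𝕜 ∞ w}
  mul_mem' hw hz := Set.mem_ofPred.2 <| (Set.mem_ofPred.1 hw).mul hz
  add_mem' hw hz := Set.mem_ofPred.2 <| (Set.mem_ofPred.1 hw).add hz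
  algebraMap_mem' c := Set.mem_ofPred.2 (contDiff_const (c := c))

namespace smoothFunctions

theorem contDiff (w : smoothFunctions 𝕜 E) : ContDiff 𝕜 ∞ (w : E → 𝕜) := w.2

theorem differentiable (w : smoothFunctions 𝕜 E) : Differentiable 𝕜 (w : E → 𝕜) :=
  (contDiff w).differentiable (by simp)

theorem contDiff_fderiv (w : smoothFunctions 𝕜 E) : ContDiff 𝕜 ∞ (fderiv 𝕜 (w : E → 𝕜)) :=
  (contDiff w).fderiv_right (by simp)

variable (𝕜) in
/-- The directional derivative `w ↦ (p ↦ fderiv 𝕜 w p v)` along a fixed vector `v`, as a derivation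
of the algebra of smooth functions. -/
noncomputable def directionalDeriv (v : E) :
    Derivation 𝕜 (smoothFunctions 𝕜 E) (smoothFunctions 𝕜 E) :=
  Derivation.mk'
    { toFun w := ⟨fun p => fderiv 𝕜 (w : E → 𝕜) p v, (contDiff_fderiv w).clm_apply contDiff_const⟩
      map_add' w z := Subtype.ext <| funext fun p => by
        simp [fderiv_add (differentiable w p) (differentiable z p)]
      map_smul' c w := Subtype.ext <| funext fun p => by
        simp [fderiv_const_smul (differentiable w p) c] }
    fun w z => Subtype.ext <| funext fun p => by
      simp [fderiv_mul (differentiable w p) (differentiable z p)]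

theorem directionalDeriv_commute {𝕜 E : Type*} [RCLike 𝕜] [NormedAddCommGroup E] [NormedSpace 𝕜 E]
    (v v' : E) :
    Function.Commute (directionalDeriv 𝕜 v) (directionalDeriv 𝕜 v') := by
  intro w
  ext p
  have second_fderiv (a b : E) :
      (directionalDeriv 𝕜 a (directionalDeriv 𝕜 b w) : E → 𝕜) p = fderiv 𝕜 (fderiv 𝕜 w) p a b := by
    have hw : DifferentiableAt 𝕜 (fderiv 𝕜 (w : E → 𝕜)) p :=
      (contDiff_fderiv w).differentiable (by simp) p
    change fderiv 𝕜 (fun q => fderiv 𝕜 (w : E → 𝕜) q b) p a = _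
    simp [fderiv_clm_apply hw (differentiableAt_const b)]
  have symm : IsSymmSndFDerivAt 𝕜 (w : E → 𝕜) p :=
    (contDiff w).contDiffAt.isSymmSndFDerivAt (by simpa using ENat.LEInfty.out)
  rw [second_fderiv, second_fderiv, symm.eq]

theorem exists_curry_eq {F : Type*} [NormedAddCommGroup F] [NormedSpace 𝕜 F] {u : E → F → 𝕜}
    (hu : ContDiff 𝕜 ∞ fun p : E × F => u p.1 p.2) :
    ∃ w : smoothFunctions 𝕜 (E × F), Function.curry w = u :=
  ⟨⟨_, hu⟩, rfl⟩

theorem ext_curry {F : Type*} [NormedAddCommGroup F] [NormedSpace 𝕜 F]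
    {w z : smoothFunctions 𝕜 (E × F)}
    (h : ∀ t x, Function.curry (w : E × F → 𝕜) t x = Function.curry (z : E × F → 𝕜) t x) : w = z :=
  Subtype.ext (Function.curry_injective (funext₂ h))

end smoothFunctions

end SmoothFunctions

section PartialDerivatives

open Function smoothFunctions

theorem dt_curry (w : smoothFunctions ℝ (ℝ × ℝ)) (t x : ℝ) :
    dt (curry w) t x = (directionalDeriv ℝ (1, 0) w : ℝ × ℝ → ℝ) (t, x) :=
  ((differentiable w (t, x)).hasFDerivAt.comp_hasDerivAt t
    ((hasDerivAt_id t).prodMk (hasDerivAt_const t x))).deriv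

theorem deriv_curry (w : smoothFunctions ℝ (ℝ × ℝ)) (t x : ℝ) :
    deriv (curry w t) x = (directionalDeriv ℝ (0, 1) w : ℝ × ℝ → ℝ) (t, x) :=
  ((differentiable w (t, x)).hasFDerivAt.comp_hasDerivAt x
    ((hasDerivAt_const x t).prodMk (hasDerivAt_id x))).deriv

theorem dx_curry (w : smoothFunctions ℝ (ℝ × ℝ)) (n : ℕ) (t x : ℝ) :
    dx (curry w) n t x = ((directionalDeriv ℝ (0, 1))^[n] w : ℝ × ℝ → ℝ) (t, x) := by
  induction n generalizing x with
  | zero => simp [dx]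
  | succ n ih =>
    have hn : iteratedDeriv n (curry w t) =
        curry ((directionalDeriv ℝ (0, 1))^[n] w : ℝ × ℝ → ℝ) t := funext ih
    rw [dx, iteratedDeriv_succ, hn, deriv_curry, iterate_succ_apply']

theorem stmt_10 (u : ℝ → ℝ → ℝ) (hu : ContDiff ℝ (⊤ : ℕ∞) fun p : ℝ × ℝ => u p.1 p.2)
    (hne : ∀ t x, u t x ≠ 0)
    (hueq : ∀ t x, dt u t x = (u t x) ^ 2 * dx u 2 t x)
    (f g : ℝ → ℝ → ℝ)
    (hf : ContDiff ℝ (⊤ : ℕ∞) fun p : ℝ × ℝ => f p.1 p.2)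
    (hg : ContDiff ℝ (⊤ : ℕ∞) fun p : ℝ × ℝ => g p.1 p.2)
    (hfeq : ∀ t x, dt f t x = (u t x) ^ 2 * dx f 2 t x + 2 * u t x * dx u 2 t x * f t x)
    (hgx : ∀ t x, dx g 1 t x = f t x / (u t x) ^ 2)
    (hgt : ∀ t x, dt g t x = dx f 1 t x)
    (h : ℝ → ℝ → ℝ)
    (hh : ∀ t x, h t x = u t x * dx f 1 t x + (u t x) ^ 2 * dx u 2 t x * g t x) :
    ∀ t x, dt h t x = (u t x) ^ 2 * dx h 2 t x + 2 * u t x * dx u 2 t x * h t x := by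
  obtain ⟨u, rfl⟩ := exists_curry_eq hu
  obtain ⟨f, rfl⟩ := exists_curry_eq hf
  obtain ⟨g, rfl⟩ := exists_curry_eq hg
  have hgx' (t x : ℝ) : curry u t x ^ 2 * dx (curry g) 1 t x = curry f t x := by
    rw [hgx, mul_div_cancel₀ _ (pow_ne_zero 2 (hne t x))]
  let Dx := directionalDeriv ℝ ((0, 1) : ℝ × ℝ)
  obtain rfl : h = curry (u * Dx f + u ^ 2 * Dx (Dx u) * g : smoothFunctions ℝ (ℝ × ℝ)) :=
    funext₂ fun t x => by simp [hh, dx_curry, curry, Dx]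
  simp only [dt_curry, dx_curry] at hueq hfeq hgx' hgt ⊢
  have hsymm := stmt_10_general (directionalDeriv_commute (1, 0) (0, 1)) (ext_curry hueq)
    (ext_curry hfeq) (ext_curry hgx') (ext_curry hgt) rfl
  exact fun t x => congrFun (Subtype.ext_iff.1 hsymm) (t, x)

end PartialDerivatives
end

section
/- Let u : ℝ × ℝ → ℝ be smooth with u(t,x) ≠ 0 for all (t,x) and satisfying u_t = u²·(1 + u_xx) at every point. Let f, g : ℝ × ℝ → ℝ be smooth functions such that: (i) f_t = u²·f_xx + 2u·(1 + u_xx)·f at every point (f is a symmetry characteristic of u_t = u²(1 + u_xx)), (ii) g_x = f/u² at every point, and (iii) g_t = f_x at every point. Then the function h(t,x) := u·f_x + (x/2)·f + u²·(1 + u_xx)·g satisfies h_t = u²·h_xx + 2u·(1 + u_xx)·h at every point; that is, h is again a symmetry characteristic. -/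
/-!
Let `L` be the linearization `∂ₜ - u² ∂ₓ² - c` of `u_t = u² (1 + u_xx)`, where
`c = 2 u (1 + u_xx)`. The Leibniz rule for `L`, the formula for the commutator of `L` with `∂ₓ` and
the identities `u_t - u² u_xx = u²`, `u_t = u c / 2`, `L u_t = 0` show that the three terms of `h`
fail to be symmetries by amounts that add up to zero when `L f = 0`:

* `L (u f_x) = u c_x f + u² f_x`,
* `L (x f / 2) = -u² f_x`,
* `L (u_t g) = -u c_x f`.
-/

section PartialDerivatives

variable {φ ψ : ℝ → ℝ → ℝ}

theorem dx_one_eq_deriv (φ : ℝ → ℝ → ℝ) (t x : ℝ) : dx φ 1 t x = deriv (φ t) x :=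
  congrFun iteratedDeriv_one x

theorem dx_one_dx (φ : ℝ → ℝ → ℝ) (n : ℕ) : dx (dx φ n) 1 = dx φ (n + 1) := by
  funext t x
  rw [dx_one_eq_deriv, dx, iteratedDeriv_succ]
  rfl

theorem dx_dx_one (φ : ℝ → ℝ → ℝ) (n : ℕ) : dx (dx φ 1) n = dx φ (n + 1) := by
  funext t x
  rw [dx, dx, iteratedDeriv_succ', ← iteratedDeriv_one]
  rfl

theorem contDiff_space_slice {n : WithTop ℕ∞} (hφ : ContDiff ℝ n (Function.uncurry φ)) (t : ℝ) :
    ContDiff ℝ n (φ t) :=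
  hφ.comp (contDiff_const.prodMk contDiff_id)

theorem hasDerivAt_dt (hφ : Differentiable ℝ (Function.uncurry φ)) (t x : ℝ) :
    HasDerivAt (fun s => φ s x) (dt φ t x) t :=
  (hφ.comp (differentiable_id.prodMk (differentiable_const x)) t).hasDerivAt

theorem hasDerivAt_dx_one (hφ : Differentiable ℝ (Function.uncurry φ)) (t x : ℝ) :
    HasDerivAt (φ t) (dx φ 1 t x) x := by
  rw [dx_one_eq_deriv]
  exact (hφ.comp ((differentiable_const t).prodMk differentiable_id) x).hasDerivAt

theorem dt_eq_fderiv_s11 (hφ : Differentiable ℝ (Function.uncurry φ)) (t x : ℝ) :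
    dt φ t x = fderiv ℝ (Function.uncurry φ) (t, x) (1, 0) := by
  have h_curve : HasDerivAt (fun s => (s, x)) ((1 : ℝ), (0 : ℝ)) t :=
    (hasDerivAt_id t).prodMk (hasDerivAt_const t x)
  exact ((hφ (t, x)).hasFDerivAt.comp_hasDerivAt t h_curve).deriv

theorem dx_one_eq_fderiv_s11 (hφ : Differentiable ℝ (Function.uncurry φ)) (t x : ℝ) :
    dx φ 1 t x = fderiv ℝ (Function.uncurry φ) (t, x) (0, 1) := by
  have h_curve : HasDerivAt (fun y => (t, y)) ((0 : ℝ), (1 : ℝ)) x :=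
    (hasDerivAt_const x t).prodMk (hasDerivAt_id x)
  rw [dx_one_eq_deriv]
  exact ((hφ (t, x)).hasFDerivAt.comp_hasDerivAt x h_curve).deriv

theorem uncurry_dt (hφ : Differentiable ℝ (Function.uncurry φ)) :
    Function.uncurry (dt φ) = fun p => fderiv ℝ (Function.uncurry φ) p (1, 0) :=
  funext fun p => dt_eq_fderiv_s11 hφ p.1 p.2

theorem uncurry_dx_one (hφ : Differentiable ℝ (Function.uncurry φ)) :
    Function.uncurry (dx φ 1) = fun p => fderiv ℝ (Function.uncurry φ) p (0, 1) :=
  funext fun p => dx_one_eq_fderiv_s11 hφ p.1 p.2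

theorem contDiff_dt {n : WithTop ℕ∞} (hφ : ContDiff ℝ (n + 1) (Function.uncurry φ)) :
    ContDiff ℝ n (Function.uncurry (dt φ)) := by
  rw [uncurry_dt (hφ.differentiable (by simp))]
  exact (hφ.fderiv_right le_rfl).clm_apply contDiff_const

theorem contDiff_dx_one {n : WithTop ℕ∞} (hφ : ContDiff ℝ (n + 1) (Function.uncurry φ)) :
    ContDiff ℝ n (Function.uncurry (dx φ 1)) := by
  rw [uncurry_dx_one (hφ.differentiable (by simp))]
  exact (hφ.fderiv_right le_rfl).clm_apply contDiff_const

theorem contDiff_dx {n : WithTop ℕ∞} {k : ℕ} (hφ : ContDiff ℝ (n + k) (Function.uncurry φ)) :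
    ContDiff ℝ n (Function.uncurry (dx φ k)) := by
  induction k generalizing n with
  | zero =>
    rw [Nat.cast_zero, add_zero] at hφ
    exact hφ
  | succ k ih =>
    rw [Nat.cast_succ, add_comm (k : WithTop ℕ∞), ← add_assoc] at hφ
    exact dx_one_dx φ k ▸ contDiff_dx_one (ih hφ)

theorem differentiable_dx_two (hφ : ContDiff ℝ 3 (Function.uncurry φ)) :
    Differentiable ℝ (Function.uncurry (dx φ 2)) :=
  (contDiff_dx (n := 1) (by exact_mod_cast hφ)).differentiable one_ne_zero

theorem dt_dx_one (hφ : ContDiff ℝ 2 (Function.uncurry φ)) : dt (dx φ 1) = dx (dt φ) 1 := by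
  funext t x
  have hdiff : Differentiable ℝ (Function.uncurry φ) := hφ.differentiable two_ne_zero
  have hφ' : ContDiff ℝ (1 + 1) (Function.uncurry φ) := by rwa [one_add_one_eq_two]
  have hfd : DifferentiableAt ℝ (fderiv ℝ (Function.uncurry φ)) (t, x) :=
    (hφ'.fderiv_right le_rfl).differentiable one_ne_zero (t, x)
  have hsymm : IsSymmSndFDerivAt ℝ (Function.uncurry φ) (t, x) :=
    hφ.contDiffAt.isSymmSndFDerivAt (by simp)
  rw [dt_eq_fderiv_s11 ((contDiff_dx_one hφ').differentiable one_ne_zero),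
    dx_one_eq_fderiv_s11 ((contDiff_dt hφ').differentiable one_ne_zero),
    uncurry_dt hdiff, uncurry_dx_one hdiff,
    fderiv_clm_apply hfd (by fun_prop), fderiv_clm_apply hfd (by fun_prop)]
  simpa using hsymm.eq (1, 0) (0, 1)

theorem dt_dx {k : ℕ} (hφ : ContDiff ℝ (k + 1) (Function.uncurry φ)) :
    dt (dx φ k) = dx (dt φ) k := by
  induction k with
  | zero => rfl
  | succ k ih =>
    have hφ_lower : ContDiff ℝ (k + 1) (Function.uncurry φ) := hφ.of_le (by norm_cast; omega)
    have hφ_dx : ContDiff ℝ 2 (Function.uncurry (dx φ k)) :=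
      contDiff_dx (hφ.of_le (by norm_cast; omega))
    rw [← dx_one_dx, dt_dx_one hφ_dx, ih hφ_lower, dx_one_dx]

theorem dx_two_mul (hφ : ContDiff ℝ 2 (Function.uncurry φ))
    (hψ : ContDiff ℝ 2 (Function.uncurry ψ)) (t x : ℝ) :
    dx (φ * ψ) 2 t x = φ t x * dx ψ 2 t x + 2 * dx φ 1 t x * dx ψ 1 t x + dx φ 2 t x * ψ t x := by
  refine (iteratedDeriv_mul (contDiff_space_slice hφ t).contDiffAt
    (contDiff_space_slice hψ t).contDiffAt).trans ?_
  simp [Finset.sum_range_succ, dx]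

end PartialDerivatives

section ParabolicOperator

variable {a c φ ψ : ℝ → ℝ → ℝ}

/-- The linear evolution operator `∂ₜ - a ∂ₓ² - c`. -/
noncomputable def parabolicOp (a c φ : ℝ → ℝ → ℝ) (t x : ℝ) : ℝ :=
  dt φ t x - a t x * dx φ 2 t x - c t x * φ t x

theorem parabolicOp_add (a c : ℝ → ℝ → ℝ) (hφ : ContDiff ℝ 2 (Function.uncurry φ))
    (hψ : ContDiff ℝ 2 (Function.uncurry ψ)) (t x : ℝ) :
    parabolicOp a c (φ + ψ) t x = parabolicOp a c φ t x + parabolicOp a c ψ t x := by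
  have h_dt : dt (φ + ψ) t x = dt φ t x + dt ψ t x :=
    ((hasDerivAt_dt (hφ.differentiable two_ne_zero) t x).add
      (hasDerivAt_dt (hψ.differentiable two_ne_zero) t x)).deriv
  have h_dx : dx (φ + ψ) 2 t x = dx φ 2 t x + dx ψ 2 t x :=
    iteratedDeriv_add (contDiff_space_slice hφ t).contDiffAt (contDiff_space_slice hψ t).contDiffAt
  simp only [parabolicOp, h_dt, h_dx, Pi.add_apply]
  ring

theorem parabolicOp_mul (a c : ℝ → ℝ → ℝ) (hφ : ContDiff ℝ 2 (Function.uncurry φ))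
    (hψ : ContDiff ℝ 2 (Function.uncurry ψ)) (t x : ℝ) :
    parabolicOp a c (φ * ψ) t x = φ t x * parabolicOp a c ψ t x
      + (dt φ t x - a t x * dx φ 2 t x) * ψ t x - 2 * a t x * dx φ 1 t x * dx ψ 1 t x := by
  have h_dt : dt (φ * ψ) t x = dt φ t x * ψ t x + φ t x * dt ψ t x :=
    ((hasDerivAt_dt (hφ.differentiable two_ne_zero) t x).mul
      (hasDerivAt_dt (hψ.differentiable two_ne_zero) t x)).deriv
  simp only [parabolicOp, h_dt, dx_two_mul hφ hψ, Pi.mul_apply]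
  ring

theorem dx_one_parabolicOp (ha : Differentiable ℝ (Function.uncurry a))
    (hc : Differentiable ℝ (Function.uncurry c)) (hφ : ContDiff ℝ 3 (Function.uncurry φ))
    (t x : ℝ) :
    dx (parabolicOp a c φ) 1 t x = parabolicOp a c (dx φ 1) t x
      - dx a 1 t x * dx φ 2 t x - dx c 1 t x * φ t x := by
  have h_dt : Differentiable ℝ (Function.uncurry (dt φ)) :=
    (contDiff_dt (n := 2) (by rwa [two_add_one_eq_three])).differentiable two_ne_zero
  have h_deriv := ((hasDerivAt_dx_one h_dt t x).sub
    ((hasDerivAt_dx_one ha t x).mul (hasDerivAt_dx_one (differentiable_dx_two hφ) t x))).sub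
      ((hasDerivAt_dx_one hc t x).mul (hasDerivAt_dx_one (hφ.differentiable three_ne_zero) t x))
  rw [dx_one_eq_deriv]
  refine h_deriv.deriv.trans ?_
  rw [parabolicOp, dt_dx_one (hφ.of_le (by norm_num)), dx_dx_one, dx_one_dx]
  ring

end ParabolicOperator

section Linearization

variable {u f g : ℝ → ℝ → ℝ}

/-- The zeroth-order coefficient `c = 2 u (1 + u_xx)` of the linearization of
`u_t = u² (1 + u_xx)`. -/
noncomputable def linearizedCoeff (u : ℝ → ℝ → ℝ) (t x : ℝ) : ℝ :=
  2 * u t x * (1 + dx u 2 t x)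

/-- The operator `∂ₜ - D_F`, where `D_F = u² ∂ₓ² + 2 u (1 + u_xx)` is the Fréchet derivative of
`F = u² (1 + u_xx)`. Its kernel consists of the symmetry characteristics of `u_t = F`. -/
noncomputable def linearizedOp (u : ℝ → ℝ → ℝ) : (ℝ → ℝ → ℝ) → ℝ → ℝ → ℝ :=
  parabolicOp (u ^ 2) (linearizedCoeff u)

theorem linearizedOp_eq_zero_iff (u φ : ℝ → ℝ → ℝ) (t x : ℝ) :
    linearizedOp u φ t x = 0 ↔
      dt φ t x = u t x ^ 2 * dx φ 2 t x + 2 * u t x * (1 + dx u 2 t x) * φ t x := by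
  simp only [linearizedOp, parabolicOp, linearizedCoeff, Pi.pow_apply, sub_sub, sub_eq_zero]

theorem differentiable_linearizedCoeff (hu : ContDiff ℝ 3 (Function.uncurry u)) :
    Differentiable ℝ (Function.uncurry (linearizedCoeff u)) :=
  ((hu.differentiable three_ne_zero).const_mul 2).mul ((differentiable_dx_two hu).const_add 1)

theorem dt_eq_half_mul_linearizedCoeff {t x : ℝ}
    (hueq : dt u t x = u t x ^ 2 * (1 + dx u 2 t x)) :
    dt u t x = u t x * linearizedCoeff u t x / 2 := by
  rw [hueq, linearizedCoeff]
  ring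

theorem linearizedOp_dt (hu : ContDiff ℝ 3 (Function.uncurry u))
    (hueq : ∀ t x, dt u t x = u t x ^ 2 * (1 + dx u 2 t x)) (t x : ℝ) :
    linearizedOp u (dt u) t x = 0 := by
  have h_dt_dt : dt (dt u) t x =
      2 * u t x * dt u t x * (1 + dx u 2 t x) + u t x ^ 2 * dt (dx u 2) t x := by
    have h_slice : (fun s => dt u s x) = fun s => u s x ^ 2 * (1 + dx u 2 s x) :=
      funext fun s => hueq s x
    have h_deriv := ((hasDerivAt_dt (hu.differentiable three_ne_zero) t x).fun_pow 2).fun_mul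
      ((hasDerivAt_dt (differentiable_dx_two hu) t x).const_add 1)
    rw [dt, h_slice, h_deriv.deriv]
    simp
  rw [linearizedOp_eq_zero_iff, h_dt_dt, dt_dx (by exact_mod_cast hu)]
  ring

theorem linearizedOp_dx_one (hu : ContDiff ℝ 3 (Function.uncurry u))
    (hf : ContDiff ℝ 3 (Function.uncurry f)) (hLf : linearizedOp u f = 0) (t x : ℝ) :
    linearizedOp u (dx f 1) t x =
      2 * u t x * dx u 1 t x * dx f 2 t x + dx (linearizedCoeff u) 1 t x * f t x := by
  have hu_diff : Differentiable ℝ (Function.uncurry u) := hu.differentiable three_ne_zero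
  have h_sq : dx (u ^ 2) 1 t x = 2 * u t x * dx u 1 t x := by
    simpa [dx_one_eq_deriv] using ((hasDerivAt_dx_one hu_diff t x).pow 2).deriv
  have h_zero : dx (linearizedOp u f) 1 t x = 0 := by
    rw [hLf, dx_one_eq_deriv]
    exact deriv_const x 0
  have h_sq_diff : Differentiable ℝ (Function.uncurry (u ^ 2)) := hu_diff.pow 2
  have h_comm := dx_one_parabolicOp h_sq_diff (differentiable_linearizedCoeff hu) hf t x
  rw [linearizedOp] at h_zero ⊢
  rw [h_zero, h_sq] at h_comm
  linear_combination -h_comm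

theorem linearizedOp_mul_dx_one (hu : ContDiff ℝ 3 (Function.uncurry u))
    (hf : ContDiff ℝ 3 (Function.uncurry f))
    (hueq : ∀ t x, dt u t x = u t x ^ 2 * (1 + dx u 2 t x))
    (hLf : linearizedOp u f = 0) (t x : ℝ) :
    linearizedOp u (u * dx f 1) t x =
      u t x * dx (linearizedCoeff u) 1 t x * f t x + u t x ^ 2 * dx f 1 t x := by
  have hf_dx : ContDiff ℝ 2 (Function.uncurry (dx f 1)) :=
    contDiff_dx_one (by rwa [two_add_one_eq_three])
  have h_mul := parabolicOp_mul (u ^ 2) (linearizedCoeff u) (hu.of_le (by norm_num)) hf_dx t x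
  rw [← linearizedOp, linearizedOp_dx_one hu hf hLf, dx_one_dx, hueq, Pi.pow_apply,
    Pi.pow_apply] at h_mul
  linear_combination h_mul

theorem linearizedOp_half_mul (hf : ContDiff ℝ 2 (Function.uncurry f))
    (hLf : linearizedOp u f = 0) (t x : ℝ) :
    linearizedOp u ((fun _ y => y / 2) * f) t x = -(u t x ^ 2 * dx f 1 t x) := by
  have h_smooth : ContDiff ℝ 2 (Function.uncurry fun _ y : ℝ => y / 2) :=
    contDiff_snd.div_const 2
  have h_dt : dt (fun _ y => y / 2) t x = 0 := deriv_const t (x / 2)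
  have h_dx : dx (fun _ y => y / 2) 1 = fun _ _ => 1 / 2 := by
    funext s y
    rw [dx_one_eq_deriv]
    exact ((hasDerivAt_id y).div_const 2).deriv
  have h_dx_two : dx (fun _ y => y / 2) 2 t x = 0 := by
    rw [← dx_one_dx, h_dx, dx_one_eq_deriv, deriv_const]
  have h_mul := parabolicOp_mul (u ^ 2) (linearizedCoeff u) h_smooth hf t x
  rw [← linearizedOp, hLf, h_dt, h_dx, h_dx_two] at h_mul
  simp only [h_mul, Pi.pow_apply, Pi.zero_apply]
  ring

theorem linearizedOp_dt_mul (hu : ContDiff ℝ 3 (Function.uncurry u))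
    (hg : ContDiff ℝ 2 (Function.uncurry g)) (hne : ∀ t x, u t x ≠ 0)
    (hueq : ∀ t x, dt u t x = u t x ^ 2 * (1 + dx u 2 t x))
    (hgx : ∀ t x, dx g 1 t x = f t x / u t x ^ 2) (hgt : ∀ t x, dt g t x = dx f 1 t x) (t x : ℝ) :
    linearizedOp u (dt u * g) t x = -(u t x * dx (linearizedCoeff u) 1 t x * f t x) := by
  have hu_dx := hasDerivAt_dx_one (hu.differentiable three_ne_zero) t x
  have hf_eq : ∀ s y, f s y = u s y ^ 2 * dx g 1 s y := fun s y => by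
    rw [hgx, mul_div_cancel₀ _ (pow_ne_zero 2 (hne s y))]
  have hf_dx : dx f 1 t x = 2 * u t x * dx u 1 t x * dx g 1 t x + u t x ^ 2 * dx g 2 t x := by
    have hg_dx : Differentiable ℝ (Function.uncurry (dx g 1)) :=
      (contDiff_dx_one (n := 1) (by rwa [one_add_one_eq_two])).differentiable one_ne_zero
    have h_deriv := (hu_dx.fun_pow 2).fun_mul (hasDerivAt_dx_one hg_dx t x)
    rw [dx_one_eq_deriv, funext (hf_eq t), h_deriv.deriv, dx_one_dx]
    simp
  have hu_dt_dx : dx (dt u) 1 t x =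
      (dx u 1 t x * linearizedCoeff u t x + u t x * dx (linearizedCoeff u) 1 t x) / 2 := by
    have h_deriv := (hu_dx.fun_mul
      (hasDerivAt_dx_one (differentiable_linearizedCoeff hu) t x)).div_const 2
    rw [dx_one_eq_deriv, show dt u t = _ from funext fun y =>
      dt_eq_half_mul_linearizedCoeff (hueq t y), h_deriv.deriv]
  have h_mul : linearizedOp u (g * dt u) t x = g t x * linearizedOp u (dt u) t x
      + (dt g t x - u t x ^ 2 * dx g 2 t x) * dt u t x
      - 2 * u t x ^ 2 * dx g 1 t x * dx (dt u) 1 t x :=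
    parabolicOp_mul (u ^ 2) (linearizedCoeff u) hg
      (contDiff_dt (by rwa [two_add_one_eq_three])) t x
  rw [mul_comm, h_mul, linearizedOp_dt hu hueq, hgt, hf_dx, hu_dt_dx,
    dt_eq_half_mul_linearizedCoeff (hueq t x), hf_eq]
  ring

end Linearization

theorem stmt_11_general (u : ℝ → ℝ → ℝ) (hu : ContDiff ℝ 3 (Function.uncurry u))
    (hne : ∀ t x, u t x ≠ 0)
    (hueq : ∀ t x, dt u t x = (u t x) ^ 2 * (1 + dx u 2 t x))
    (f g : ℝ → ℝ → ℝ)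
    (hf : ContDiff ℝ 3 (Function.uncurry f)) (hg : ContDiff ℝ 2 (Function.uncurry g))
    (hfeq : ∀ t x, dt f t x =
      (u t x) ^ 2 * dx f 2 t x + 2 * u t x * (1 + dx u 2 t x) * f t x)
    (hgx : ∀ t x, dx g 1 t x = f t x / (u t x) ^ 2)
    (hgt : ∀ t x, dt g t x = dx f 1 t x)
    (h : ℝ → ℝ → ℝ)
    (hh : ∀ t x, h t x = u t x * dx f 1 t x + (x / 2) * f t x
      + (u t x) ^ 2 * (1 + dx u 2 t x) * g t x) :
    ∀ t x, dt h t x = (u t x) ^ 2 * dx h 2 t x + 2 * u t x * (1 + dx u 2 t x) * h t x := by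
  have hLf : linearizedOp u f = 0 := by
    funext t x
    exact (linearizedOp_eq_zero_iff u f t x).2 (hfeq t x)
  have hf_two : ContDiff ℝ 2 (Function.uncurry f) := hf.of_le (by norm_num)
  have h_eq : h = u * dx f 1 + (fun _ y => y / 2) * f + dt u * g := by
    funext t x
    rw [hh, ← hueq]
    rfl
  have h_fst : ContDiff ℝ 2 (Function.uncurry (u * dx f 1)) :=
    (hu.of_le (by norm_num)).mul (contDiff_dx_one (by rwa [two_add_one_eq_three]))
  have h_snd : ContDiff ℝ 2 (Function.uncurry ((fun _ y => y / 2) * f)) :=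
    (contDiff_snd.div_const 2).mul hf_two
  have h_trd : ContDiff ℝ 2 (Function.uncurry (dt u * g)) :=
    (contDiff_dt (by rwa [two_add_one_eq_three])).mul hg
  intro t x
  have h_split : linearizedOp u h t x = linearizedOp u (u * dx f 1) t x
      + linearizedOp u ((fun _ y => y / 2) * f) t x + linearizedOp u (dt u * g) t x := by
    rw [h_eq, linearizedOp, parabolicOp_add (φ := u * dx f 1 + _) _ _ (h_fst.add h_snd) h_trd,
      parabolicOp_add _ _ h_fst h_snd]
  rw [← linearizedOp_eq_zero_iff, h_split, linearizedOp_mul_dx_one hu hf hueq hLf,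
    linearizedOp_half_mul hf_two hLf, linearizedOp_dt_mul hu hg hne hueq hgx hgt]
  ring

theorem stmt_11 (u : ℝ → ℝ → ℝ) (hu : ContDiff ℝ (⊤ : ℕ∞) fun p : ℝ × ℝ => u p.1 p.2)
    (hne : ∀ t x, u t x ≠ 0)
    (hueq : ∀ t x, dt u t x = (u t x) ^ 2 * (1 + dx u 2 t x))
    (f g : ℝ → ℝ → ℝ)
    (hf : ContDiff ℝ (⊤ : ℕ∞) fun p : ℝ × ℝ => f p.1 p.2)
    (hg : ContDiff ℝ (⊤ : ℕ∞) fun p : ℝ × ℝ => g p.1 p.2)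
    (hfeq : ∀ t x, dt f t x =
      (u t x) ^ 2 * dx f 2 t x + 2 * u t x * (1 + dx u 2 t x) * f t x)
    (hgx : ∀ t x, dx g 1 t x = f t x / (u t x) ^ 2)
    (hgt : ∀ t x, dt g t x = dx f 1 t x)
    (h : ℝ → ℝ → ℝ)
    (hh : ∀ t x, h t x = u t x * dx f 1 t x + (x / 2) * f t x
      + (u t x) ^ 2 * (1 + dx u 2 t x) * g t x) :
    ∀ t x, dt h t x = (u t x) ^ 2 * dx h 2 t x + 2 * u t x * (1 + dx u 2 t x) * h t x :=
  stmt_11_general u (contDiff_infty.1 hu 3) hne hueq f g (contDiff_infty.1 hf 3)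
    (contDiff_infty.1 hg 2) hfeq hgx hgt h hh
end

section
/- Let u : ℝ × ℝ → ℝ be smooth and satisfy u_t = u²·(1 + u_xx) at every point. Then the function Q(t,x) := −2u − 2t·u²·(1 + u_xx) + x·u_x satisfies Q_t = u²·Q_xx + 2u·(1 + u_xx)·Q at every point; that is, Q is a symmetry characteristic of u_t = u²(1 + u_xx). -/
/-!
Translating a solution `u` of an autonomous equation `u_t = F(u, u_xx)` in `t` and in `x` shows that
`u_t` and `u_x` solve the linearized equation. Hence the characteristic `α u + β t u_t + x u_x` of a
scaling fails to solve it only through the term `α u` and the commutators of the linearized operator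
with multiplication by `t` and by `x`; these contributions add up to
`(α + β) F - D F (α u, (α + 2) u_xx)`. For `F(u, w) = u² (1 + w)` and `α = β = -2` this is zero by
Euler's identity, `F` being quadratic in its first argument.
-/

open Function (uncurry)

section PartialDerivatives

variable {f : ℝ → ℝ → ℝ} {m n : WithTop ℕ∞}

lemma hasDerivAt_time (hf : Differentiable ℝ (uncurry f)) (t x : ℝ) :
    HasDerivAt (fun s => f s x) (dt f t x) t :=
  (hf.comp (differentiable_id.prodMk (differentiable_const x)) t).hasDerivAt

lemma hasDerivAt_space (hf : Differentiable ℝ (uncurry f)) (t x : ℝ) :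
    HasDerivAt (f t) (dx f 1 t x) x := by
  rw [dx, iteratedDeriv_one]
  exact (hf.comp ((differentiable_const t).prodMk differentiable_id) x).hasDerivAt

lemma contDiffAt_space (hf : ContDiff ℝ n (uncurry f)) (t x : ℝ) :
    ContDiffAt ℝ n (f t) x :=
  (hf.comp (contDiff_prodMk_right t)).contDiffAt

lemma uncurry_dt_eq_fderiv (hf : Differentiable ℝ (uncurry f)) :
    uncurry (dt f) = fun p => fderiv ℝ (uncurry f) p (1, 0) := by
  funext ⟨t, x⟩
  have along_time : HasDerivAt (fun s => f s x) (fderiv ℝ (uncurry f) (t, x) (1, 0)) t :=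
    (hf (t, x)).hasFDerivAt.comp_hasDerivAt (f := fun s => (s, x)) t
      ((hasDerivAt_id t).prodMk (hasDerivAt_const t x))
  exact along_time.deriv

lemma uncurry_dx_one_eq_fderiv (hf : Differentiable ℝ (uncurry f)) :
    uncurry (dx f 1) = fun p => fderiv ℝ (uncurry f) p (0, 1) := by
  funext ⟨t, x⟩
  have along_space : HasDerivAt (f t) (fderiv ℝ (uncurry f) (t, x) (0, 1)) x :=
    (hf (t, x)).hasFDerivAt.comp_hasDerivAt (f := fun y => (t, y)) x
      ((hasDerivAt_const x t).prodMk (hasDerivAt_id x))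
  exact (hasDerivAt_space hf t x).unique along_space

lemma contDiff_dt_s13 (hf : ContDiff ℝ n (uncurry f)) (hmn : m + 1 ≤ n) :
    ContDiff ℝ m (uncurry (dt f)) := by
  have hf1 : Differentiable ℝ (uncurry f) :=
    (hf.of_le (le_add_self.trans hmn)).differentiable one_ne_zero
  rw [uncurry_dt_eq_fderiv hf1]
  exact (hf.fderiv_right hmn).clm_apply contDiff_const

lemma contDiff_dx_one_s13 (hf : ContDiff ℝ n (uncurry f)) (hmn : m + 1 ≤ n) :
    ContDiff ℝ m (uncurry (dx f 1)) := by
  have hf1 : Differentiable ℝ (uncurry f) :=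
    (hf.of_le (le_add_self.trans hmn)).differentiable one_ne_zero
  rw [uncurry_dx_one_eq_fderiv hf1]
  exact (hf.fderiv_right hmn).clm_apply contDiff_const

lemma dx_dx (f : ℝ → ℝ → ℝ) (j k : ℕ) : dx (dx f j) k = dx f (j + k) := by
  funext t x
  change iteratedDeriv k (iteratedDeriv j (f t)) x = iteratedDeriv (j + k) (f t) x
  simp only [iteratedDeriv_eq_iterate, add_comm j, Function.iterate_add_apply]

lemma contDiff_dx_s13 (k : ℕ) (hf : ContDiff ℝ n (uncurry f)) (hmn : m + k ≤ n) :
    ContDiff ℝ m (uncurry (dx f k)) := by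
  induction k generalizing m with
  | zero => exact hf.of_le (by simpa using hmn)
  | succ k ih =>
    rw [← dx_dx f k 1]
    have hmn' : m + 1 + k ≤ n := by
      rwa [Nat.cast_succ, add_comm (k : WithTop ℕ∞), ← add_assoc] at hmn
    exact contDiff_dx_one_s13 (ih hmn') le_rfl

lemma dt_dx_one_comm (hf : ContDiff ℝ 2 (uncurry f)) : dt (dx f 1) = dx (dt f) 1 := by
  have hf1 : Differentiable ℝ (uncurry f) := hf.differentiable two_ne_zero
  have hf' : Differentiable ℝ (fderiv ℝ (uncurry f)) :=
    (hf.fderiv_right one_add_one_eq_two.le).differentiable one_ne_zero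
  have hsymm (p : ℝ × ℝ) : IsSymmSndFDerivAt ℝ (uncurry f) p :=
    hf.contDiffAt.isSymmSndFDerivAt (by simp)
  apply Function.uncurry_injective
  rw [uncurry_dt_eq_fderiv ((contDiff_dx_one_s13 hf one_add_one_eq_two.le).differentiable one_ne_zero),
    uncurry_dx_one_eq_fderiv ((contDiff_dt_s13 hf one_add_one_eq_two.le).differentiable one_ne_zero),
    uncurry_dt_eq_fderiv hf1, uncurry_dx_one_eq_fderiv hf1]
  funext p
  simpa [fderiv_clm_apply (hf' p)] using hsymm p (1, 0) (0, 1)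

lemma dt_dx_comm (k : ℕ) (hf : ContDiff ℝ (k + 1) (uncurry f)) :
    dt (dx f k) = dx (dt f) k := by
  induction k with
  | zero => rfl
  | succ k ih =>
    have hf_k : ContDiff ℝ 2 (uncurry (dx f k)) :=
      contDiff_dx_s13 k hf (by rw [Nat.cast_succ, add_assoc, one_add_one_eq_two, add_comm])
    rw [← dx_dx f k 1, dt_dx_one_comm hf_k, ih (hf.of_le (by simp)), dx_dx]

end PartialDerivatives

section Linearization

/-- `u` is a classical solution of the autonomous evolution equation `u_t = F(u, u_xx)`. -/
def IsSolution (F : ℝ × ℝ → ℝ) (u : ℝ → ℝ → ℝ) : Prop :=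
  ∀ t x, dt u t x = F (u t x, dx u 2 t x)

/-- The defect `Q_t - D_F Q` of `Q` in the linearization of `u_t = F(u, u_xx)` at `u`, so that `Q`
is a symmetry characteristic when it vanishes along solutions. -/
noncomputable def linearizedDefect (F : ℝ × ℝ → ℝ) (u Q : ℝ → ℝ → ℝ) (t x : ℝ) : ℝ :=
  dt Q t x - fderiv ℝ F (u t x, dx u 2 t x) (Q t x, dx Q 2 t x)

variable {F : ℝ × ℝ → ℝ} {u f g : ℝ → ℝ → ℝ}

lemma linearizedDefect_add (hf : ContDiff ℝ 2 (uncurry f)) (hg : ContDiff ℝ 2 (uncurry g))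
    (t x : ℝ) :
    linearizedDefect F u (f + g) t x = linearizedDefect F u f t x + linearizedDefect F u g t x := by
  have h_t : dt (f + g) t x = dt f t x + dt g t x :=
    ((hasDerivAt_time (hf.differentiable two_ne_zero) t x).add
      (hasDerivAt_time (hg.differentiable two_ne_zero) t x)).deriv
  have h_xx : dx (f + g) 2 t x = dx f 2 t x + dx g 2 t x :=
    iteratedDeriv_add (contDiffAt_space hf t x) (contDiffAt_space hg t x)
  simp only [linearizedDefect, h_t, h_xx, Pi.add_apply, ← Prod.mk_add_mk, map_add]
  ring

lemma linearizedDefect_const_mul (c : ℝ) (f : ℝ → ℝ → ℝ) (t x : ℝ) :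
    linearizedDefect F u (fun t x => c * f t x) t x = c * linearizedDefect F u f t x := by
  have h_t : dt (fun t x => c * f t x) t x = c * dt f t x := deriv_const_mul_field c
  have h_xx : dx (fun t x => c * f t x) 2 t x = c * dx f 2 t x :=
    iteratedDeriv_const_mul_field c (f t)
  have h_smul : (c * f t x, c * dx f 2 t x) = c • (f t x, dx f 2 t x) := rfl
  rw [linearizedDefect, h_t, h_xx, h_smul, map_smul, smul_eq_mul, linearizedDefect, mul_sub]

lemma linearizedDefect_time_mul (hf : Differentiable ℝ (uncurry f)) (t x : ℝ) :
    linearizedDefect F u (fun t x => t * f t x) t x = t * linearizedDefect F u f t x + f t x := by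
  have h_t : dt (fun t x => t * f t x) t x = 1 * f t x + t * dt f t x :=
    ((hasDerivAt_id t).mul (hasDerivAt_time hf t x)).deriv
  have h_xx : dx (fun t x => t * f t x) 2 t x = t * dx f 2 t x :=
    iteratedDeriv_const_mul_field t (f t)
  have h_smul : (t * f t x, t * dx f 2 t x) = t • (f t x, dx f 2 t x) := rfl
  rw [linearizedDefect, h_t, h_xx, h_smul, map_smul, smul_eq_mul, linearizedDefect]
  ring

lemma linearizedDefect_space_mul (hf : ContDiff ℝ 2 (uncurry f)) (t x : ℝ) :
    linearizedDefect F u (fun t x => x * f t x) t x =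
      x * linearizedDefect F u f t x
        - fderiv ℝ F (u t x, dx u 2 t x) (0, 2 * dx f 1 t x) := by
  have h_t : dt (fun t x => x * f t x) t x = x * dt f t x := deriv_const_mul_field x
  have h_xx : dx (fun t x => x * f t x) 2 t x = x * dx f 2 t x + 2 * dx f 1 t x := by
    have leibniz := iteratedDeriv_mul (contDiffAt_id (x := x)) (contDiffAt_space hf t x)
    refine leibniz.trans ?_
    simp [dx, Finset.sum_range_succ, iteratedDeriv_id]
  have h_split : (x * f t x, x * dx f 2 t x + 2 * dx f 1 t x) =
      x • (f t x, dx f 2 t x) + (0, 2 * dx f 1 t x) := by simp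
  rw [linearizedDefect, h_t, h_xx, h_split, map_add, map_smul, smul_eq_mul, linearizedDefect]
  ring

lemma IsSolution.linearizedDefect_self (hsol : IsSolution F u) (t x : ℝ) :
    linearizedDefect F u u t x =
      F (u t x, dx u 2 t x) - fderiv ℝ F (u t x, dx u 2 t x) (u t x, dx u 2 t x) := by
  rw [linearizedDefect, hsol]

lemma IsSolution.linearizedDefect_dt (hsol : IsSolution F u) (hF : Differentiable ℝ F)
    (hu : ContDiff ℝ 3 (uncurry u)) (t x : ℝ) : linearizedDefect F u (dt u) t x = 0 := by
  have hu_xx : ContDiff ℝ 1 (uncurry (dx u 2)) := contDiff_dx_s13 2 hu (by norm_num)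
  have chain : HasDerivAt (fun s => F (u s x, dx u 2 s x))
      (fderiv ℝ F (u t x, dx u 2 t x) (dt u t x, dt (dx u 2) t x)) t :=
    (hF (u t x, dx u 2 t x)).hasFDerivAt.comp_hasDerivAt t
      ((hasDerivAt_time (hu.differentiable three_ne_zero) t x).prodMk
        (hasDerivAt_time (hu_xx.differentiable one_ne_zero) t x))
  rw [linearizedDefect, ← dt_dx_comm 2 (hu.of_le (by norm_num)), ← chain.deriv, sub_eq_zero, dt]
  simp only [hsol _ x]

lemma IsSolution.linearizedDefect_dx_one (hsol : IsSolution F u) (hF : Differentiable ℝ F)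
    (hu : ContDiff ℝ 3 (uncurry u)) (t x : ℝ) : linearizedDefect F u (dx u 1) t x = 0 := by
  have hu_xx : ContDiff ℝ 1 (uncurry (dx u 2)) := contDiff_dx_s13 2 hu (by norm_num)
  have chain : HasDerivAt (fun y => F (u t y, dx u 2 t y))
      (fderiv ℝ F (u t x, dx u 2 t x) (dx u 1 t x, dx (dx u 2) 1 t x)) x :=
    (hF (u t x, dx u 2 t x)).hasFDerivAt.comp_hasDerivAt x
      ((hasDerivAt_space (hu.differentiable three_ne_zero) t x).prodMk
        (hasDerivAt_space (hu_xx.differentiable one_ne_zero) t x))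
  rw [linearizedDefect, dt_dx_one_comm (hu.of_le (by norm_num)), dx_dx, add_comm, ← dx_dx,
    ← chain.deriv, sub_eq_zero, dx, iteratedDeriv_one, funext (hsol t)]

theorem IsSolution.linearizedDefect_scaling (hsol : IsSolution F u) (hF : Differentiable ℝ F)
    (hu : ContDiff ℝ 3 (uncurry u)) (α β t x : ℝ) :
    linearizedDefect F u
        (fun t x => α * u t x + β * (t * dt u t x) + x * dx u 1 t x) t x =
      (α + β) * F (u t x, dx u 2 t x)
        - fderiv ℝ F (u t x, dx u 2 t x) (α * u t x, (α + 2) * dx u 2 t x) := by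
  have hu_t : ContDiff ℝ 2 (uncurry (dt u)) := contDiff_dt_s13 hu two_add_one_eq_three.le
  have hu_x : ContDiff ℝ 2 (uncurry (dx u 1)) := contDiff_dx_one_s13 hu two_add_one_eq_three.le
  have h_value : ContDiff ℝ 2 (uncurry fun t x => α * u t x) :=
    contDiff_const.mul (hu.of_le (by norm_num))
  have h_time : ContDiff ℝ 2 (uncurry fun t x => β * (t * dt u t x)) :=
    contDiff_const.mul (contDiff_fst.mul hu_t)
  have h_space : ContDiff ℝ 2 (uncurry fun t x => x * dx u 1 t x) := contDiff_snd.mul hu_x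
  have h_split : (α * u t x, (α + 2) * dx u 2 t x) =
      α • (u t x, dx u 2 t x) + (0, 2 * dx u 2 t x) := by simp [add_mul]
  have h_add : linearizedDefect F u
        (fun t x => α * u t x + β * (t * dt u t x) + x * dx u 1 t x) t x =
      linearizedDefect F u (fun t x => α * u t x) t x
        + linearizedDefect F u (fun t x => β * (t * dt u t x)) t x
        + linearizedDefect F u (fun t x => x * dx u 1 t x) t x := by
    rw [← linearizedDefect_add h_value h_time]
    exact linearizedDefect_add (f := fun t x => α * u t x + β * (t * dt u t x))
      (h_value.add h_time) h_space t x
  calc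
    _ = α * linearizedDefect F u u t x
          + β * (t * linearizedDefect F u (dt u) t x + dt u t x)
          + (x * linearizedDefect F u (dx u 1) t x
            - fderiv ℝ F (u t x, dx u 2 t x) (0, 2 * dx (dx u 1) 1 t x)) := by
      rw [h_add, linearizedDefect_const_mul α u, linearizedDefect_const_mul β,
        linearizedDefect_time_mul (hu_t.differentiable two_ne_zero),
        linearizedDefect_space_mul hu_x]
    _ = _ := by
      rw [hsol.linearizedDefect_self, hsol.linearizedDefect_dt hF hu,
        hsol.linearizedDefect_dx_one hF hu, hsol t x, dx_dx, h_split, map_add, map_smul,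
        smul_eq_mul]
      ring

end Linearization

lemma fderiv_sq_mul_one_add (a b v w : ℝ) :
    fderiv ℝ (fun p : ℝ × ℝ => p.1 ^ 2 * (1 + p.2)) (a, b) (v, w) =
      a ^ 2 * w + 2 * a * (1 + b) * v := by
  have h_sq := (hasFDerivAt_fst (𝕜 := ℝ) (p := (a, b))).pow 2
  have h_one_add := (hasFDerivAt_snd (𝕜 := ℝ) (p := (a, b))).const_add (1 : ℝ)
  rw [(h_sq.fun_mul h_one_add).fderiv]
  simp only [Nat.add_one_sub_one, pow_one, nsmul_eq_mul, Nat.cast_ofNat, add_apply, smul_apply,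
    ContinuousLinearMap.coe_snd', ContinuousLinearMap.coe_fst', smul_eq_mul]
  ring

theorem stmt_13_general (u : ℝ → ℝ → ℝ) (hu : ContDiff ℝ 3 fun p : ℝ × ℝ => u p.1 p.2)
    (heq : ∀ t x, dt u t x = (u t x) ^ 2 * (1 + dx u 2 t x))
    (Q : ℝ → ℝ → ℝ)
    (hQ : ∀ t x, Q t x = -2 * u t x - 2 * t * (u t x) ^ 2 * (1 + dx u 2 t x) + x * dx u 1 t x) :
    ∀ t x, dt Q t x = (u t x) ^ 2 * dx Q 2 t x + 2 * u t x * (1 + dx u 2 t x) * Q t x := by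
  intro t x
  have hF : Differentiable ℝ fun p : ℝ × ℝ => p.1 ^ 2 * (1 + p.2) := by fun_prop
  have hsol : IsSolution (fun p => p.1 ^ 2 * (1 + p.2)) u := heq
  have Q_eq_scaling : Q = fun t x => -2 * u t x + -2 * (t * dt u t x) + x * dx u 1 t x := by
    funext t x
    rw [hQ, heq]
    ring
  have defect_zero : linearizedDefect (fun p => p.1 ^ 2 * (1 + p.2)) u Q t x = 0 := by
    rw [Q_eq_scaling, hsol.linearizedDefect_scaling hF hu, fderiv_sq_mul_one_add]
    ring
  rwa [linearizedDefect, fderiv_sq_mul_one_add, sub_eq_zero] at defect_zero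

theorem stmt_13 (u : ℝ → ℝ → ℝ) (hu : ContDiff ℝ (⊤ : ℕ∞) fun p : ℝ × ℝ => u p.1 p.2)
    (heq : ∀ t x, dt u t x = (u t x) ^ 2 * (1 + dx u 2 t x))
    (Q : ℝ → ℝ → ℝ)
    (hQ : ∀ t x, Q t x = -2 * u t x - 2 * t * (u t x) ^ 2 * (1 + dx u 2 t x) + x * dx u 1 t x) :
    ∀ t x, dt Q t x = (u t x) ^ 2 * dx Q 2 t x + 2 * u t x * (1 + dx u 2 t x) * Q t x :=
  stmt_13_general u (contDiff_infty.1 hu 3) heq Q hQ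
end

section
/- Let β₀ ∈ ℝ and let α, γ : ℝ → ℝ be smooth. Let u : ℝ × ℝ → ℝ be a smooth function satisfying u_t = u_xx + α(u) + β₀·u_x + γ(u)·u_x² at every point. Then at every point (t,x): ∂_t[−β₀ − 2γ(u)·u_x] = ∂_x[−2α(u)·γ(u) − 2γ(u)²·u_x² − 2γ(u)·(β₀·u_x + u_xx)]. In other words, ρ₀ := −β₀ − 2γ(u)u_x is a conserved density with flux σ₀ := −2αγ − 2γ²u_x² − 2γ(β₀u_x + u_xx). -/
/-!
Along solutions the flux is just `-2 γ(u) u_t`, while the density is `-2 γ(u) u_x` up to a constant.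
The conservation law is therefore the closedness `∂_t (γ(u) u_x) = ∂_x (γ(u) u_t)` of the one-form
`γ(u) du`, which holds for every `C²` function `u`, solution or not: both sides equal
`γ'(u) u_t u_x + γ(u) u_tx`.
-/

section PartialDerivatives

variable {𝕜 E : Type*} [NontriviallyNormedField 𝕜] [NormedAddCommGroup E] [NormedSpace 𝕜 E]
  {f : 𝕜 × 𝕜 → E}

theorem hasDerivAt_fst_slice {t x : 𝕜} (hf : DifferentiableAt 𝕜 f (t, x)) :
    HasDerivAt (fun s => f (s, x)) (fderiv 𝕜 f (t, x) (1, 0)) t :=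
  hf.hasFDerivAt.comp_hasDerivAt t ((hasDerivAt_id t).prodMk (hasDerivAt_const t x))

theorem hasDerivAt_snd_slice {t x : 𝕜} (hf : DifferentiableAt 𝕜 f (t, x)) :
    HasDerivAt (fun y => f (t, y)) (fderiv 𝕜 f (t, x) (0, 1)) x :=
  hf.hasFDerivAt.comp_hasDerivAt x ((hasDerivAt_const x t).prodMk (hasDerivAt_id x))

theorem hasDerivAt_fst_deriv_snd (hf : Differentiable 𝕜 f) {t x : 𝕜}
    (hf' : DifferentiableAt 𝕜 (fderiv 𝕜 f) (t, x)) :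
    HasDerivAt (fun s => deriv (fun y => f (s, y)) x)
      (fderiv 𝕜 (fderiv 𝕜 f) (t, x) (1, 0) (0, 1)) t := by
  simp only [fun s => (hasDerivAt_snd_slice (hf (s, x))).deriv]
  simpa using (hasDerivAt_fst_slice hf').clm_apply (hasDerivAt_const t ((0, 1) : 𝕜 × 𝕜))

theorem hasDerivAt_snd_deriv_fst (hf : Differentiable 𝕜 f) {t x : 𝕜}
    (hf' : DifferentiableAt 𝕜 (fderiv 𝕜 f) (t, x)) :
    HasDerivAt (fun y => deriv (fun s => f (s, y)) t)
      (fderiv 𝕜 (fderiv 𝕜 f) (t, x) (0, 1) (1, 0)) x := by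
  simp only [fun y => (hasDerivAt_fst_slice (hf (t, y))).deriv]
  simpa using (hasDerivAt_snd_slice hf').clm_apply (hasDerivAt_const x ((1, 0) : 𝕜 × 𝕜))

end PartialDerivatives

theorem deriv_comp_mul_dx_one_eq_deriv_comp_mul_dt {γ : ℝ → ℝ} {u : ℝ → ℝ → ℝ} {t x : ℝ}
    (hγ : DifferentiableAt ℝ γ (u t x)) (hu : ContDiff ℝ 2 fun p : ℝ × ℝ => u p.1 p.2) :
    deriv (fun s => γ (u s x) * dx u 1 s x) t = deriv (fun y => γ (u t y) * dt u t y) x := by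
  have hu₁ : Differentiable ℝ fun p : ℝ × ℝ => u p.1 p.2 := hu.differentiable two_ne_zero
  have hu₂ : DifferentiableAt ℝ (fderiv ℝ fun p : ℝ × ℝ => u p.1 p.2) (t, x) :=
    (hu.fderiv_right (m := 1) (by norm_num)).differentiable one_ne_zero (t, x)
  have u_t : HasDerivAt (fun s => u s x) (deriv (fun s => u s x) t) t :=
    (hasDerivAt_fst_slice (hu₁ (t, x))).differentiableAt.hasDerivAt
  have u_x : HasDerivAt (u t) (deriv (u t) x) x :=
    (hasDerivAt_snd_slice (hu₁ (t, x))).differentiableAt.hasDerivAt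
  have mixed_partials_comm := second_derivative_symmetric
    (fun p => (hu₁ p).hasFDerivAt) hu₂.hasFDerivAt (1, 0) (0, 1)
  simp only [dx, dt, iteratedDeriv_one]
  calc deriv (fun s => γ (u s x) * deriv (u s) x) t
      = deriv γ (u t x) * deriv (fun s => u s x) t * deriv (u t) x
          + γ (u t x) * fderiv ℝ (fderiv ℝ fun p : ℝ × ℝ => u p.1 p.2) (t, x) (1, 0) (0, 1) :=
        ((hγ.hasDerivAt.comp t u_t).mul (hasDerivAt_fst_deriv_snd hu₁ hu₂)).deriv
    _ = deriv γ (u t x) * deriv (u t) x * deriv (fun s => u s x) t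
          + γ (u t x) * fderiv ℝ (fderiv ℝ fun p : ℝ × ℝ => u p.1 p.2) (t, x) (0, 1) (1, 0) := by
        rw [mixed_partials_comm]
        ring
    _ = deriv (fun y => γ (u t y) * deriv (fun s => u s y) t) x :=
        ((hγ.hasDerivAt.comp x u_x).mul (hasDerivAt_snd_deriv_fst hu₁ hu₂)).deriv.symm

theorem stmt_17_general (β₀ : ℝ) (α γ : ℝ → ℝ) (hγ : Differentiable ℝ γ)
    (u : ℝ → ℝ → ℝ) (hu : ContDiff ℝ 2 fun p : ℝ × ℝ => u p.1 p.2)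
    (heq : ∀ t x, dt u t x = dx u 2 t x + α (u t x) + β₀ * dx u 1 t x
      + γ (u t x) * (dx u 1 t x) ^ 2) :
    ∀ t x, deriv (fun s => -β₀ - 2 * γ (u s x) * dx u 1 s x) t =
      deriv (fun y => -2 * α (u t y) * γ (u t y) - 2 * γ (u t y) ^ 2 * (dx u 1 t y) ^ 2
        - 2 * γ (u t y) * (β₀ * dx u 1 t y + dx u 2 t y)) x := by
  intro t x
  have flux_eq : ∀ y, -2 * α (u t y) * γ (u t y) - 2 * γ (u t y) ^ 2 * (dx u 1 t y) ^ 2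
      - 2 * γ (u t y) * (β₀ * dx u 1 t y + dx u 2 t y) = -2 * (γ (u t y) * dt u t y) := by
    intro y
    rw [heq]
    ring
  calc deriv (fun s => -β₀ - 2 * γ (u s x) * dx u 1 s x) t
      = -2 * deriv (fun s => γ (u s x) * dx u 1 s x) t := by
        simp only [mul_assoc, deriv_const_sub, deriv_const_mul_field, neg_mul]
    _ = -2 * deriv (fun y => γ (u t y) * dt u t y) x := by
        rw [deriv_comp_mul_dx_one_eq_deriv_comp_mul_dt (hγ (u t x)) hu]
    _ = _ := by simp only [flux_eq, deriv_const_mul_field]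

theorem stmt_17 (β₀ : ℝ) (α γ : ℝ → ℝ) (hα : ContDiff ℝ (⊤ : ℕ∞) α) (hγ : ContDiff ℝ (⊤ : ℕ∞) γ)
    (u : ℝ → ℝ → ℝ) (hu : ContDiff ℝ (⊤ : ℕ∞) fun p : ℝ × ℝ => u p.1 p.2)
    (heq : ∀ t x, dt u t x = dx u 2 t x + α (u t x) + β₀ * dx u 1 t x
      + γ (u t x) * (dx u 1 t x) ^ 2) :
    ∀ t x, deriv (fun s => -β₀ - 2 * γ (u s x) * dx u 1 s x) t =
      deriv (fun y => -2 * α (u t y) * γ (u t y) - 2 * γ (u t y) ^ 2 * (dx u 1 t y) ^ 2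
        - 2 * γ (u t y) * (β₀ * dx u 1 t y + dx u 2 t y)) x :=
  stmt_17_general β₀ α γ (hγ.differentiable (by simp)) u (contDiff_infty.mp hu 2) heq
end
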